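/- arXiv:1301.7215 — 3 statements merged into one kernel-verified Lean document; each statement's English description precedes it below -/
import Mathlib

section
/- Let V = {A ∈ Matrix (Fin 3) (Fin 3) ℂ : (I₃, A, A²) is linearly dependent over ℂ}, let R = MvPolynomial (Fin 3 × Fin 3) ℂ with its standard grading, and let I(V) be the vanishing ideal of V. For d ∈ ℕ, let h_d = dim_ℂ R_d − dim_ℂ (I(V) ∩ R_d), the dimension of the degree-d homogeneous component of the coordinate ring R/I(V). Then in the formal power series ring ℚ[[t]] (or ℤ[[t]]): (1 − t)⁶ · Σ_{d≥0} h_d t^d = 1 + 3t + 6t² − 10t³ + 10t⁴ − 5t⁵ + t⁶. -/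
/-!
Over an algebraically closed field, a `3 × 3` matrix with minimal polynomial of degree at most `2`
is a scalar plus a matrix of rank at most one, so the coordinate ring in question is the subalgebra
of `K[λ, x₁, x₂, x₃, y₁, y₂, y₃]` generated by the entries `δᵢⱼ λ + xᵢ yⱼ`. Its part of degree
`d + 1` lies in the part of bidegree `(d + 1, d + 1)`, where `x`, `y`, `λ` have bidegrees `(1, 0)`,
`(0, 1)`, `(1, 1)`. With at least three indices, any product of two forms `xᵢ yⱼ` is quadratic in
the traceless forms `xᵢ yⱼ` (`i ≠ j`) and `xᵢ yᵢ - xⱼ yⱼ`, which are combinations of entries. It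
follows that only the one direction `λᵈ xᵢ yᵢ` can be missed, and a second-order differential
functional vanishing on the subalgebra shows that it is missed. As the bidegree `(d, d)` part has
dimension `∑_{k ≤ d} C(k + 2, 2)²`, the Hilbert series is `(1 + 4t + t²) / (1 - t)⁶ - t / (1 - t)`.
-/

open Matrix

section QuadraticMatrices

open Polynomial

variable {K : Type*} [Field K]

theorem not_linearIndependent_pow_iff {R A : Type*} [CommRing R] [Ring A] [Algebra R A]
    {a : A} {n : ℕ} :
    ¬ LinearIndependent R (fun r : Fin n => a ^ (r : ℕ)) ↔
      ∃ p : R[X], p ≠ 0 ∧ p.degree < n ∧ aeval a p = 0 := by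
  have aeval_eq (g : Fin n → R) :
      aeval a ((degreeLTEquiv R n).symm g : R[X]) = ∑ i, g i • a ^ (i : ℕ) := by
    simp [degreeLTEquiv, aeval_monomial, Algebra.smul_def]
  simp_rw [Fintype.not_linearIndependent_iff, ← aeval_eq]
  constructor
  · rintro ⟨g, hg, i, hi⟩
    refine ⟨(degreeLTEquiv R n).symm g, ?_, mem_degreeLT.mp (Subtype.prop _), hg⟩
    simpa using Function.ne_iff.mpr ⟨i, hi⟩
  · rintro ⟨p, hp, hdeg, hpa⟩
    exact ⟨degreeLTEquiv R n ⟨p, mem_degreeLT.mpr hdeg⟩, by simpa using hpa,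
      Function.ne_iff.mp ((degreeLTEquiv R n).map_ne_zero_iff.mpr (by simpa using hp))⟩

theorem exists_dvd_prod_X_sub_C [IsAlgClosed K] {p : K[X]} {n : ℕ} (hp : p ≠ 0)
    (hn : p.natDegree ≤ n) :
    ∃ s : Multiset K, s.card = n ∧ p ∣ (s.map fun a => X - C a).prod := by
  refine ⟨p.roots + Multiset.replicate (n - p.natDegree) 0, ?_, ?_⟩
  · simp [IsAlgClosed.card_roots_eq_natDegree, hn]
  · rw [Multiset.map_add, Multiset.prod_add]
    refine Dvd.dvd.mul_right ?_ _
    conv_lhs => rw [(IsAlgClosed.splits p).eq_prod_roots]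
    exact (C_mul_dvd (leadingCoeff_ne_zero.mpr hp)).mpr dvd_rfl

theorem not_linearIndependent_pow_three_iff [IsAlgClosed K] {A : Type*} [Ring A] [Algebra K A]
    {a : A} :
    ¬ LinearIndependent K (fun r : Fin 3 => a ^ (r : ℕ)) ↔
      ∃ r s : K, (a - algebraMap K A r) * (a - algebraMap K A s) = 0 := by
  have aeval_mul (r s : K) : aeval a ((X - C r) * (X - C s)) =
      (a - algebraMap K A r) * (a - algebraMap K A s) := by simp
  rw [not_linearIndependent_pow_iff]
  constructor
  · rintro ⟨p, hp, hdeg, hpa⟩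
    obtain ⟨roots, hcard, hdvd⟩ := exists_dvd_prod_X_sub_C hp
      (Nat.lt_succ_iff.mp ((natDegree_lt_iff_degree_lt hp).mpr hdeg))
    obtain ⟨r, s, rfl⟩ := Multiset.card_eq_two.mp hcard
    refine ⟨r, s, ?_⟩
    rw [← aeval_mul]
    exact aeval_eq_zero_of_dvd_aeval_eq_zero (by simpa using hdvd) hpa
  · rintro ⟨r, s, h⟩
    have hmonic : ((X - C r) * (X - C s)).Monic := (monic_X_sub_C r).mul (monic_X_sub_C s)
    refine ⟨_, hmonic.ne_zero, ?_, (aeval_mul r s).trans h⟩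
    rw [degree_mul, degree_X_sub_C, degree_X_sub_C]
    norm_num

theorem exists_eq_vecMulVec_of_rank_le_one {m n : Type*} [Fintype n]
    {B : Matrix m n K} (h : B.rank ≤ 1) : ∃ u v, B = vecMulVec u v := by
  rw [rank_eq_finrank_span_cols] at h
  have := FiniteDimensional.span_of_finite K (Set.finite_range B.col)
  obtain ⟨u, hu⟩ := finrank_le_one_iff.mp h
  choose v hv using fun j => hu ⟨B.col j, Submodule.subset_span ⟨j, rfl⟩⟩
  refine ⟨u, v, Matrix.ext fun i j => ?_⟩
  rw [vecMulVec_apply, mul_comm]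
  exact (congrFun (congrArg Subtype.val (hv j)) i).symm

variable {ι : Type*} [Fintype ι] [DecidableEq ι]

/-- The matrix `l • 1 + x yᵀ`. Over a polynomial ring with the coefficients of `l`, `x` and `y` as
indeterminates, it is the generic matrix differing from a scalar by a matrix of rank at most one. -/
def scalarAddVecMulVec {A : Type*} [CommSemiring A] (l : A) (x y : ι → A) : Matrix ι ι A :=
  scalar ι l + vecMulVec x y

theorem scalarAddVecMulVec_sub_mul_sub {A : Type*} [CommRing A] (l : A) (x y : ι → A) :
    (scalarAddVecMulVec l x y - scalar ι l) *
      (scalarAddVecMulVec l x y - scalar ι (l + y ⬝ᵥ x)) = 0 := by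
  have hsq : vecMulVec x y * vecMulVec x y = vecMulVec x y * scalar ι (y ⬝ᵥ x) := by
    rw [vecMulVec_mul_vecMulVec, vecMulVec_smul, scalar_apply, smul_eq_mul_diagonal]
  rw [scalarAddVecMulVec, map_add, add_sub_cancel_left, add_sub_add_left_eq_sub, mul_sub, hsq,
    sub_self]

theorem not_linearIndependent_pow_three_iff_exists_scalarAddVecMulVec [IsAlgClosed K]
    (hι : Fintype.card ι ≤ 3) {A : Matrix ι ι K} :
    ¬ LinearIndependent K (fun r : Fin 3 => A ^ (r : ℕ)) ↔
      ∃ l x y, A = scalarAddVecMulVec l x y := by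
  rw [not_linearIndependent_pow_three_iff]
  constructor
  · rintro ⟨r, s, h⟩
    have hrank := (rank_add_rank_le_card_of_mul_eq_zero h).trans hι
    obtain ⟨l, hl⟩ : ∃ l, (A - algebraMap K _ l).rank ≤ 1 := by
      by_contra! hc
      linarith [hc r, hc s]
    obtain ⟨x, y, hxy⟩ := exists_eq_vecMulVec_of_rank_le_one hl
    exact ⟨l, x, y, (add_eq_of_eq_sub' hxy.symm).symm⟩
  · rintro ⟨l, x, y, rfl⟩
    exact ⟨_, _, scalarAddVecMulVec_sub_mul_sub l x y⟩

end QuadraticMatrices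

section IdemCommSemiring

variable {α : Type*} [IdemCommSemiring α] {a b t z n : α}

theorem add_pow_succ_le_pow_succ_add_mul (d : ℕ) :
    (a + b) ^ (d + 1) ≤ a ^ (d + 1) + (a + b) ^ d * b := by
  induction d with
  | zero => simp
  | succ d ih =>
    calc (a + b) ^ (d + 2) = (a + b) ^ (d + 1) * a + (a + b) ^ (d + 1) * b := by ring
      _ ≤ (a ^ (d + 1) + (a + b) ^ d * b) * a + (a + b) ^ (d + 1) * b := by gcongr
      _ = a ^ (d + 2) + ((a + b) ^ d * a * b + (a + b) ^ (d + 1) * b) := by ring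
      _ ≤ a ^ (d + 2) + ((a + b) ^ d * (a + b) * b + (a + b) ^ (d + 1) * b) := by
        gcongr
        simp
      _ = a ^ (d + 2) + (a + b) ^ (d + 1) * b := by rw [← pow_succ, add_idem]

theorem add_mul_le_mul_of_mul_self_le (h : a + b ≤ z + n) (hn : n ≤ b) (htz : t ≤ z)
    (htb : t ≤ b) (hb : b * b ≤ t * t) : (a + b) * t ≤ z * t :=
  calc (a + b) * t ≤ (z + n) * t := by gcongr
    _ = z * t + n * t := add_mul ..
    _ ≤ z * t + b * b := by gcongr
    _ ≤ z * t + t * t := by gcongr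
    _ ≤ z * t + z * t := by gcongr
    _ = z * t := add_idem _

theorem add_pow_mul_mul_self_le (h : a + b ≤ z + n) (hn : n ≤ b) (htz : t ≤ z)
    (htb : t ≤ b) (hb : b * b ≤ t * t) (d : ℕ) : (a + b) ^ d * (b * b) ≤ z ^ (d + 2) := by
  have hstep : (a + b) ^ d * t ≤ z ^ d * t := by
    induction d with
    | zero => simp
    | succ d ih =>
      calc (a + b) ^ (d + 1) * t = (a + b) ^ d * ((a + b) * t) := by ring
        _ ≤ (a + b) ^ d * (z * t) := by
          gcongr _ * ?_
          exact add_mul_le_mul_of_mul_self_le h hn htz htb hb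
        _ = z * ((a + b) ^ d * t) := by ring
        _ ≤ z * (z ^ d * t) := by gcongr
        _ = z ^ (d + 1) * t := by ring
  calc (a + b) ^ d * (b * b) ≤ (a + b) ^ d * (t * t) := by gcongr
    _ = (a + b) ^ d * t * t := by ring
    _ ≤ z ^ d * t * t := by gcongr
    _ ≤ z ^ d * z * z := by gcongr
    _ = z ^ (d + 2) := by ring

theorem add_pow_succ_le_pow_succ_add_pow_mul (hz : z ≤ a + b) (h : a + b ≤ z + n) (hn : n ≤ b)
    (htz : t ≤ z) (htb : t ≤ b) (hb : b * b ≤ t * t) (d : ℕ) :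
    (a + b) ^ (d + 1) ≤ z ^ (d + 1) + a ^ d * n := by
  induction d with
  | zero => simpa using h
  | succ d ih =>
    have ha : a ≤ a + b := le_self_add
    calc (a + b) ^ (d + 2) = (a + b) ^ (d + 1) * (a + b) := by ring
      _ ≤ (a + b) ^ (d + 1) * (z + n) := by gcongr
      _ = (a + b) ^ (d + 1) * z + (a + b) ^ (d + 1) * n := mul_add ..
      _ ≤ (z ^ (d + 1) + a ^ d * n) * z + (a ^ (d + 1) + (a + b) ^ d * b) * n := by
        gcongr
        exact add_pow_succ_le_pow_succ_add_mul d
      _ ≤ (z ^ (d + 1) * z + a ^ d * n * (a + b)) + (a ^ (d + 1) + (a + b) ^ d * b) * n := by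
        rw [add_mul _ _ z]
        gcongr
      _ = z ^ (d + 2) + (a ^ (d + 1) * n + a ^ (d + 1) * n) +
          (a ^ d * (n * b) + (a + b) ^ d * (b * n)) := by ring
      _ ≤ z ^ (d + 2) + (a ^ (d + 1) * n + a ^ (d + 1) * n) +
          ((a + b) ^ d * (b * b) + (a + b) ^ d * (b * b)) := by gcongr
      _ = z ^ (d + 2) + a ^ (d + 1) * n + (a + b) ^ d * (b * b) := by rw [add_idem, add_idem]
      _ ≤ z ^ (d + 2) + a ^ (d + 1) * n + z ^ (d + 2) := by
        gcongr _ + ?_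
        exact add_pow_mul_mul_self_le h hn htz htb hb d
      _ = z ^ (d + 2) + a ^ (d + 1) * n := by rw [add_right_comm, add_idem]

end IdemCommSemiring

section SpanVecMulVec

open Submodule

variable {R A ι : Type*} [CommRing R] [CommRing A] [Algebra R A]

variable (R) in
/-- The span of the sums `∑ cᵢⱼ xᵢ yⱼ` with traceless coefficient matrix `c`, given by the obvious
generators. -/
def tracelessSpan (x y : ι → A) : Submodule R A :=
  span R ({f | ∃ i j, i ≠ j ∧ x i * y j = f} ∪ {f | ∃ i j, x i * y i - x j * y j = f})

variable {x y : ι → A}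

theorem mul_mem_tracelessSpan {i j : ι} (h : i ≠ j) : x i * y j ∈ tracelessSpan R x y :=
  subset_span (.inl ⟨i, j, h, rfl⟩)

theorem mul_sub_mul_mem_tracelessSpan (i j : ι) :
    x i * y i - x j * y j ∈ tracelessSpan R x y :=
  subset_span (.inr ⟨i, j, rfl⟩)

theorem tracelessSpan_le {p : Submodule R A} (h : ∀ i j, i ≠ j → x i * y j ∈ p)
    (h' : ∀ i j, x i * y i - x j * y j ∈ p) : tracelessSpan R x y ≤ p := by
  rw [tracelessSpan, span_le, Set.union_subset_iff]
  exact ⟨fun _ ⟨i, j, hij, hf⟩ => hf ▸ h i j hij, fun _ ⟨i, j, hf⟩ => hf ▸ h' i j⟩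

theorem mul_mem_span_mul_span (i j : ι) :
    x i * y j ∈ span R (Set.range x) * span R (Set.range y) :=
  mul_mem_mul (subset_span ⟨i, rfl⟩) (subset_span ⟨j, rfl⟩)

variable [Fintype ι]

theorem mul_mul_mul_mem_tracelessSpan_mul_self (hι : 3 ≤ Fintype.card ι) (i j k l : ι) :
    x i * y j * (x k * y l) ∈ tracelessSpan R x y * tracelessSpan R x y := by
  have exists_ne_ne : ∀ i j : ι, ∃ m, m ≠ i ∧ m ≠ j :=
    Cardinal.exists_ne_ne_of_three_le (by simpa using hι)
  have offdiag {i j k l : ι} (hij : i ≠ j) (hkl : k ≠ l) :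
      x i * y j * (x k * y l) ∈ tracelessSpan R x y * tracelessSpan R x y :=
    mul_mem_mul (mul_mem_tracelessSpan hij) (mul_mem_tracelessSpan hkl)
  have offdiag_swap {i j k l : ι} (hil : i ≠ l) (hkj : k ≠ j) :
      x i * y j * (x k * y l) ∈ tracelessSpan R x y * tracelessSpan R x y := by
    convert offdiag hil hkj using 1
    ring
  have offdiag_diag {i j : ι} (k : ι) (hij : i ≠ j) :
      x i * y j * (x k * y k) ∈ tracelessSpan R x y * tracelessSpan R x y := by
    obtain ⟨m, hmi, hmj⟩ := exists_ne_ne i j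
    convert add_mem (offdiag_swap hmi.symm hmj)
      (mul_mem_mul (mul_mem_tracelessSpan hij) (mul_sub_mul_mem_tracelessSpan k m)) using 1
    ring
  have diag_sq (i : ι) :
      x i * y i * (x i * y i) ∈ tracelessSpan R x y * tracelessSpan R x y := by
    obtain ⟨a, hai, -⟩ := exists_ne_ne i i
    obtain ⟨b, hbi, hba⟩ := exists_ne_ne i a
    convert sub_mem (add_mem (mul_mem_mul (mul_sub_mul_mem_tracelessSpan i a)
      (mul_sub_mul_mem_tracelessSpan i b)) (add_mem (offdiag_swap hbi.symm hbi)
      (offdiag_swap hai.symm hai))) (offdiag_swap hba.symm hba) using 1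
    ring
  rcases eq_or_ne i j with rfl | hij <;> rcases eq_or_ne k l with rfl | hkl
  · rcases eq_or_ne i k with rfl | hik
    exacts [diag_sq i, offdiag_swap hik hik.symm]
  · exact mul_comm (x i * y i) _ ▸ offdiag_diag i hkl
  · exact offdiag_diag k hij
  · exact offdiag hij hkl

theorem mul_self_le_tracelessSpan_mul_self (hι : 3 ≤ Fintype.card ι) :
    span R (Set.range x) * span R (Set.range y) * (span R (Set.range x) * span R (Set.range y)) ≤
      tracelessSpan R x y * tracelessSpan R x y := by
  simp only [span_mul_span, span_le, Set.mul_subset_iff, Set.mem_mul, Set.mem_range]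
  rintro _ ⟨_, ⟨i, rfl⟩, _, ⟨j, rfl⟩, rfl⟩ _ ⟨_, ⟨k, rfl⟩, _, ⟨l, rfl⟩, rfl⟩
  exact mul_mul_mul_mem_tracelessSpan_mul_self hι i j k l

variable [DecidableEq ι]

variable (R) in
/-- The span of the entries of `scalarAddVecMulVec l x y`. -/
def entrySpan (l : A) (x y : ι → A) : Submodule R A :=
  span R (Set.range fun p : ι × ι => scalarAddVecMulVec l x y p.1 p.2)

variable {l : A}

theorem scalarAddVecMulVec_apply_of_ne {i j : ι} (h : i ≠ j) :
    scalarAddVecMulVec l x y i j = x i * y j := by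
  simp [scalarAddVecMulVec, vecMulVec_apply, h]

theorem scalarAddVecMulVec_apply_self (i : ι) :
    scalarAddVecMulVec l x y i i = l + x i * y i := by
  simp [scalarAddVecMulVec, vecMulVec_apply]

theorem mul_mem_entrySpan {i j : ι} (h : i ≠ j) : x i * y j ∈ entrySpan R l x y :=
  subset_span ⟨(i, j), scalarAddVecMulVec_apply_of_ne h⟩

theorem add_mul_mem_entrySpan (i : ι) : l + x i * y i ∈ entrySpan R l x y :=
  subset_span ⟨(i, i), scalarAddVecMulVec_apply_self i⟩

theorem tracelessSpan_le_entrySpan : tracelessSpan R x y ≤ entrySpan R l x y :=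
  tracelessSpan_le (fun _ _ => mul_mem_entrySpan) fun i j => by
    simpa using sub_mem (add_mul_mem_entrySpan (R := R) (l := l) i) (add_mul_mem_entrySpan j)

theorem entrySpan_le :
    entrySpan R l x y ≤ span R {l} ⊔ span R (Set.range x) * span R (Set.range y) := by
  rw [entrySpan, span_le]
  rintro _ ⟨⟨i, j⟩, rfl⟩
  change scalarAddVecMulVec l x y i j ∈ _
  rcases eq_or_ne i j with rfl | hij
  · rw [scalarAddVecMulVec_apply_self]
    exact add_mem_sup (mem_span_singleton_self l) (mul_mem_span_mul_span i i)
  · rw [scalarAddVecMulVec_apply_of_ne hij]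
    exact mem_sup_right (mul_mem_span_mul_span i j)

theorem le_entrySpan_sup (i : ι) :
    span R {l} ⊔ span R (Set.range x) * span R (Set.range y) ≤
      entrySpan R l x y ⊔ span R {x i * y i} := by
  have hl : l ∈ entrySpan R l x y ⊔ span R {x i * y i} :=
    (Submodule.add_mem_iff_left _ (mem_sup_right (mem_span_singleton_self _))).mp
      (mem_sup_left (add_mul_mem_entrySpan i))
  rw [sup_le_iff, span_mul_span, span_singleton_le_iff_mem, span_le]
  refine ⟨hl, ?_⟩
  rintro _ ⟨_, ⟨j, rfl⟩, _, ⟨k, rfl⟩, rfl⟩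
  change x j * y k ∈ _
  rcases eq_or_ne j k with rfl | hjk
  · exact (Submodule.add_mem_iff_right _ hl).mp (mem_sup_left (add_mul_mem_entrySpan j))
  · exact mem_sup_left (mul_mem_entrySpan hjk)

theorem pow_succ_le_entrySpan_pow_succ_sup (hι : 3 ≤ Fintype.card ι) (i : ι) (d : ℕ) :
    (span R {l} ⊔ span R (Set.range x) * span R (Set.range y)) ^ (d + 1) ≤
      entrySpan R l x y ^ (d + 1) ⊔ span R {l ^ d * (x i * y i)} := by
  have traceless_le : tracelessSpan R x y ≤ span R (Set.range x) * span R (Set.range y) :=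
    tracelessSpan_le (fun j k _ => mul_mem_span_mul_span j k) fun j k =>
      sub_mem (mul_mem_span_mul_span j j) (mul_mem_span_mul_span k k)
  have h := add_pow_succ_le_pow_succ_add_pow_mul (entrySpan_le (l := l)) (le_entrySpan_sup i)
    ((span_singleton_le_iff_mem _ _).mpr (mul_mem_span_mul_span i i)) tracelessSpan_le_entrySpan
    traceless_le (mul_self_le_tracelessSpan_mul_self hι) d
  rwa [span_pow, Set.singleton_pow, span_mul_span R {_}, Set.singleton_mul_singleton] at h

end SpanVecMulVec

section FiniteDimensional

open Module

variable {K V W : Type*} [DivisionRing K] [AddCommGroup V] [Module K V] [AddCommGroup W]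
  [Module K W]

theorem finrank_map_add_finrank_inf_ker (f : V →ₗ[K] W) (p : Submodule K V)
    [FiniteDimensional K p] :
    finrank K (p.map f) + finrank K (p ⊓ f.ker : Submodule K V) = finrank K p := by
  rw [← LinearMap.finrank_range_add_finrank_ker (f.domRestrict p), LinearMap.range_domRestrict,
    LinearMap.ker_domRestrict, ← Submodule.finrank_map_subtype_eq, Submodule.map_comap_subtype]

theorem finrank_sup_span_singleton {p : Submodule K V} [FiniteDimensional K p] {v : V}
    (hv : v ∉ p) : finrank K (p ⊔ Submodule.span K {v} : Submodule K V) = finrank K p + 1 := by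
  have hv0 : v ≠ 0 := fun h => hv (h ▸ p.zero_mem)
  rw [← finrank_span_singleton (K := K) hv0, ← Submodule.finrank_sup_add_finrank_inf_eq,
    ((Submodule.disjoint_span_singleton' hv0).mpr hv).eq_bot, finrank_bot, add_zero]

end FiniteDimensional

section PolynomialRing

open MvPolynomial

theorem map_homogeneousSubmodule_aeval {R A σ : Type*} [CommSemiring R] [CommSemiring A]
    [Algebra R A] (f : σ → A) (d : ℕ) :
    (homogeneousSubmodule σ R d).map (aeval f).toLinearMap =
      Submodule.span R (Set.range f) ^ d := by
  rw [← homogeneousSubmodule_one_pow, Submodule.map_pow, homogeneousSubmodule_one_eq_span_X,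
    Submodule.map_span, ← Set.range_comp]
  congr! 3
  ext i
  simp

instance finite_homogeneousSubmodule (R σ : Type*) [CommSemiring R] [Finite σ] (d : ℕ) :
    Module.Finite R (homogeneousSubmodule σ R d) :=
  Module.Finite.iff_fg.mpr (homogeneousSubmodule_fg σ R d)

theorem weightedHomogeneousSubmodule_pow_le {R M σ : Type*} [CommSemiring R] [AddCommMonoid M]
    (w : σ → M) (m : M) (d : ℕ) :
    weightedHomogeneousSubmodule R w m ^ d ≤ weightedHomogeneousSubmodule R w (d • m) := by
  induction d with
  | zero => simpa [Submodule.one_le] using isWeightedHomogeneous_one R w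
  | succ d ih =>
    rw [pow_succ, succ_nsmul]
    exact (mul_le_mul_left ih _).trans (weightedHomogeneousSubmodule_mul w _ _)

theorem finrank_weightedHomogeneousSubmodule {R M σ : Type*} [CommRing R] [Nontrivial R]
    [AddCommMonoid M] (w : σ → M) (m : M) :
    Module.finrank R (weightedHomogeneousSubmodule R w m) =
      Nat.card {u : σ →₀ ℕ // Finsupp.weight w u = m} := by
  have h : weightedHomogeneousSubmodule R w m = restrictSupport R {u | Finsupp.weight w u = m} :=
    weightedHomogeneousSubmodule_eq_finsupp_supported R w m
  rw [h]
  exact Module.finrank_eq_nat_card_basis (basisRestrictSupport R _)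

theorem prod_pow_mem_span_range_pow {R A ι : Type*} [CommSemiring R] [CommSemiring A] [Algebra R A]
    [Fintype ι] (f : ι → A) (u : ι → ℕ) :
    ∏ i, f i ^ u i ∈ Submodule.span R (Set.range f) ^ ∑ i, u i := by
  have := Submodule.nat_power_gradedMonoid (Submodule.span R (Set.range f))
  simpa [smul_eq_mul] using
    SetLike.prod_pow_mem_graded (fun d : ℕ => Submodule.span R (Set.range f) ^ d)
      (fun _ => 1) f u (F := Finset.univ) fun i _ => by
        simpa using Submodule.subset_span (Set.mem_range_self i)

variable {ι : Type*}

/-- The bidegree in which the variables `x` have weight `(1, 0)`, the variables `y` weight `(0, 1)`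
and the scalar variable, indexed by `none`, weight `(1, 1)`. -/
def bidegree : Option (ι ⊕ ι) → ℕ × ℕ
  | none => (1, 1)
  | some (.inl _) => (1, 0)
  | some (.inr _) => (0, 1)

theorem weight_bidegree [Fintype ι] (u : Option (ι ⊕ ι) →₀ ℕ) :
    Finsupp.weight bidegree u =
      (u none + ∑ i, u (some (.inl i)), u none + ∑ i, u (some (.inr i))) := by
  rw [Finsupp.weight_apply, Finsupp.sum_fintype _ _ (by simp)]
  simp [Fintype.sum_option, bidegree, Prod.ext_iff, Prod.fst_sum, Prod.snd_sum]

theorem card_weight_bidegree_eq [Fintype ι] (d : ℕ) :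
    Nat.card {u : Option (ι ⊕ ι) →₀ ℕ // Finsupp.weight bidegree u = (d, d)} =
      ∑ k ∈ Finset.range (d + 1), (Fintype.card ι).multichoose k ^ 2 := by
  classical
  let e : (Option (ι ⊕ ι) →₀ ℕ) ≃ Σ _ : ℕ, (ι →₀ ℕ) × (ι →₀ ℕ) :=
    Finsupp.optionEquiv.trans <| ((Equiv.refl ℕ).prodCongr Finsupp.sumFinsuppEquivProdFinsupp).trans
      (Equiv.sigmaEquivProd _ _).symm
  let s := (Finset.range (d + 1)).sigma fun a =>
    let A := (Finset.univ : Finset ι).finsuppAntidiag (d - a)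
    A ×ˢ A
  have mem_s (u : Option (ι ⊕ ι) →₀ ℕ) : Finsupp.weight bidegree u = (d, d) ↔ e u ∈ s := by
    simp only [s, weight_bidegree, Prod.mk.injEq, Finset.mem_sigma, Finset.mem_range,
      Finset.mem_product, Finset.mem_finsuppAntidiag, Finset.subset_univ, and_true]
    change _ ↔ u none < d + 1 ∧ ∑ i, u (some (.inl i)) = d - u none ∧
      ∑ i, u (some (.inr i)) = d - u none
    omega
  rw [Nat.card_congr (e.subtypeEquiv mem_s), Nat.card_eq_fintype_card, Fintype.card_coe,
    Finset.card_sigma, ← Finset.sum_range_reflect (fun k => (Fintype.card ι).multichoose k ^ 2)]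
  simp [Finset.card_finsuppAntidiag_nat_eq_multichoose, sq]

variable {R : Type*} [CommRing R]

variable (ι R) in
/-- The part of bidegree `(1, 1)`, given by its generators, the scalar variable and the products
`xᵢ yⱼ`. Its powers are the parts of bidegree `(d, d)`. -/
noncomputable def bidegreeOne : Submodule R (MvPolynomial (Option (ι ⊕ ι)) R) :=
  Submodule.span R {X none} ⊔ Submodule.span R (Set.range fun i => X (some (.inl i))) *
    Submodule.span R (Set.range fun i => X (some (.inr i)))

theorem bidegreeOne_le :
    bidegreeOne ι R ≤ weightedHomogeneousSubmodule R bidegree (1, 1) := by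
  have range_le (f : ι → Option (ι ⊕ ι)) (m : ℕ × ℕ) (hf : ∀ i, bidegree (f i) = m) :
      Submodule.span R (Set.range fun i => X (f i)) ≤
        weightedHomogeneousSubmodule R bidegree m := by
    rw [Submodule.span_le]
    rintro _ ⟨i, rfl⟩
    exact hf i ▸ isWeightedHomogeneous_X R bidegree (f i)
  refine sup_le ?_ ((mul_le_mul' (range_le _ (1, 0) fun _ => rfl)
    (range_le _ (0, 1) fun _ => rfl)).trans (weightedHomogeneousSubmodule_mul _ _ _))
  rw [Submodule.span_singleton_le_iff_mem]
  exact isWeightedHomogeneous_X R bidegree none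

theorem monomial_mem_bidegreeOne_pow [Finite ι] {d : ℕ} {u : Option (ι ⊕ ι) →₀ ℕ}
    (hu : Finsupp.weight bidegree u = (d, d)) (r : R) : monomial u r ∈ bidegreeOne ι R ^ d := by
  cases nonempty_fintype ι
  obtain ⟨hx, hy⟩ := Prod.mk.inj ((weight_bidegree u).symm.trans hu)
  have hxy : ∑ i, u (some (.inr i)) = ∑ i, u (some (.inl i)) := by omega
  have hle : Submodule.span R {X none} ^ u none *
      (Submodule.span R (Set.range fun i => X (some (.inl i))) ^ (∑ i, u (some (.inl i))) *
        Submodule.span R (Set.range fun i => X (some (.inr i))) ^ (∑ i, u (some (.inr i)))) ≤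
      bidegreeOne ι R ^ d := by
    rw [hxy, ← mul_pow, ← hx, pow_add]
    exact mul_le_mul' (pow_le_pow_left' le_sup_left _) (pow_le_pow_left' le_sup_right _)
  rw [monomial_eq, Finsupp.prod_fintype _ _ (by simp), ← smul_eq_C_mul, Fintype.prod_option,
    Fintype.prod_sum_type]
  exact Submodule.smul_mem _ _ <| hle <| Submodule.mul_mem_mul
    (Submodule.pow_mem_pow _ (Submodule.mem_span_singleton_self _) _) <| Submodule.mul_mem_mul
    (prod_pow_mem_span_range_pow _ _) (prod_pow_mem_span_range_pow _ _)

theorem bidegreeOne_pow [Finite ι] (d : ℕ) :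
    bidegreeOne ι R ^ d = weightedHomogeneousSubmodule R bidegree (d, d) := by
  apply le_antisymm
  · have h : (d, d) = d • ((1, 1) : ℕ × ℕ) := by simp
    rw [h]
    exact (pow_le_pow_left' bidegreeOne_le d).trans
      (weightedHomogeneousSubmodule_pow_le bidegree (1, 1) d)
  · intro f hf
    induction hf using IsWeightedHomogeneous.induction_on with
    | zero => exact zero_mem _
    | add _ _ _ _ hp hq => exact add_mem hp hq
    | monomial u r hu => exact monomial_mem_bidegreeOne_pow hu r

section Obstruction

variable (ι R) in
/-- The point `λ = 1`, `x = y = 0`. -/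
def basePoint : Option (ι ⊕ ι) → R :=
  fun v => v.elim 1 fun _ => 0

variable [Fintype ι]

variable (ι R) in
/-- The value of `∑ᵢ ∂²f/∂xᵢ∂yᵢ - ∂f/∂λ` at `basePoint`, a linear functional detecting that
`λᵈ xᵢ yᵢ` is not a polynomial in the entries of `λ • 1 + x yᵀ`. -/
noncomputable def obstruction : MvPolynomial (Option (ι ⊕ ι)) R →ₗ[R] R :=
  (aeval (basePoint ι R)).toLinearMap ∘ₗ
    (∑ i : ι, (pderiv (some (.inl i))).toLinearMap ∘ₗ (pderiv (some (.inr i))).toLinearMap -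
      (pderiv none).toLinearMap)

theorem obstruction_apply (f : MvPolynomial (Option (ι ⊕ ι)) R) :
    obstruction ι R f =
      ∑ i, eval (basePoint ι R) (pderiv (some (.inl i)) (pderiv (some (.inr i)) f)) -
        eval (basePoint ι R) (pderiv none f) := by
  simp [obstruction]

theorem obstruction_mul_X_none (f : MvPolynomial (Option (ι ⊕ ι)) R) :
    obstruction ι R (f * X none) = obstruction ι R f - eval (basePoint ι R) f := by
  simp [obstruction_apply, basePoint, sub_sub, add_comm]

theorem obstruction_mul_X_mul_X [DecidableEq ι] (f : MvPolynomial (Option (ι ⊕ ι)) R) (i j : ι) :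
    obstruction ι R (f * (X (some (.inl i)) * X (some (.inr j)))) =
      if i = j then eval (basePoint ι R) f else 0 := by
  have pderiv_pderiv (k : ι) : eval (basePoint ι R) (pderiv (some (.inl k))
      (pderiv (some (.inr k)) (f * (X (some (.inl i)) * X (some (.inr j)))))) =
      if k = i then if k = j then eval (basePoint ι R) f else 0 else 0 := by
    have pderiv_inr : pderiv (some (.inr k)) (X (some (.inr j)) : MvPolynomial (Option (ι ⊕ ι)) R) =
        C (if k = j then 1 else 0) := by
      simp [pderiv_X, Pi.single_apply, eq_comm, apply_ite C]
    have pderiv_inl : pderiv (some (.inl k)) (X (some (.inl i)) : MvPolynomial (Option (ι ⊕ ι)) R) =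
        C (if k = i then 1 else 0) := by
      simp [pderiv_X, Pi.single_apply, eq_comm, apply_ite C]
    split_ifs at pderiv_inl pderiv_inr ⊢ <;> simp [basePoint, pderiv_inl, pderiv_inr]
  have pderiv_none : eval (basePoint ι R)
      (pderiv none (f * (X (some (.inl i)) * X (some (.inr j))))) = 0 := by
    simp [basePoint]
  simp only [obstruction_apply, pderiv_pderiv, pderiv_none]
  simp

theorem obstruction_X_pow_mul (d : ℕ) (i : ι) :
    obstruction ι R (X none ^ d * (X (some (.inl i)) * X (some (.inr i)))) = 1 := by
  classical
  rw [obstruction_mul_X_mul_X, if_pos rfl]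
  simp [basePoint]

end Obstruction

section Comorphism

variable [Fintype ι] [DecidableEq ι]

variable (ι R) in
/-- The comorphism of the parametrization `(λ, x, y) ↦ λ • 1 + x yᵀ`. -/
noncomputable def comorphism : MvPolynomial (ι × ι) R →ₐ[R] MvPolynomial (Option (ι ⊕ ι)) R :=
  aeval fun p => scalarAddVecMulVec (X none) (fun i => X (some (.inl i)))
    (fun i => X (some (.inr i))) p.1 p.2

theorem obstruction_mul_comorphism_X (f : MvPolynomial (Option (ι ⊕ ι)) R) (p : ι × ι) :
    obstruction ι R (f * comorphism ι R (X p)) =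
      if p.1 = p.2 then obstruction ι R f else 0 := by
  obtain ⟨i, j⟩ := p
  rw [comorphism, aeval_X]
  rcases eq_or_ne i j with rfl | hij
  · rw [scalarAddVecMulVec_apply_self, mul_add, map_add, obstruction_mul_X_none,
      obstruction_mul_X_mul_X]
    simp
  · rw [scalarAddVecMulVec_apply_of_ne hij, obstruction_mul_X_mul_X]
    simp [hij]

theorem obstruction_comorphism (f : MvPolynomial (ι × ι) R) :
    obstruction ι R (comorphism ι R f) = 0 := by
  induction f using MvPolynomial.induction_on with
  | C a => simp [obstruction_apply]
  | add f g hf hg => simp [hf, hg]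
  | mul_X f p hf => rw [map_mul, obstruction_mul_comorphism_X, hf, ite_self]

theorem map_comorphism_homogeneousSubmodule (d : ℕ) :
    (homogeneousSubmodule (ι × ι) R d).map (comorphism ι R).toLinearMap =
      entrySpan R (X none) (fun i => X (some (.inl i))) (fun i => X (some (.inr i))) ^ d :=
  map_homogeneousSubmodule_aeval _ d

theorem bidegreeOne_pow_succ_eq (hι : 3 ≤ Fintype.card ι) (i : ι) (d : ℕ) :
    bidegreeOne ι R ^ (d + 1) =
      (homogeneousSubmodule (ι × ι) R (d + 1)).map (comorphism ι R).toLinearMap ⊔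
        Submodule.span R {X none ^ d * (X (some (.inl i)) * X (some (.inr i)))} := by
  rw [map_comorphism_homogeneousSubmodule]
  apply le_antisymm
  · exact pow_succ_le_entrySpan_pow_succ_sup hι i d
  · refine sup_le (pow_le_pow_left' entrySpan_le _) ?_
    rw [Submodule.span_singleton_le_iff_mem, pow_succ]
    exact Submodule.mul_mem_mul
      (Submodule.pow_mem_pow _ (Submodule.mem_sup_left (Submodule.mem_span_singleton_self _)) d)
      (Submodule.mem_sup_right (mul_mem_span_mul_span i i))

theorem X_pow_mul_notMem_map_comorphism [Nontrivial R]
    (p : Submodule R (MvPolynomial (ι × ι) R)) (d : ℕ) (i : ι) :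
    X none ^ d * (X (some (.inl i)) * X (some (.inr i))) ∉
      p.map (comorphism ι R).toLinearMap := by
  rintro ⟨f, -, hf⟩
  refine one_ne_zero (α := R) ?_
  rw [← obstruction_X_pow_mul d i, ← hf]
  exact obstruction_comorphism f

theorem finrank_map_comorphism_zero {K : Type*} [Field K] :
    Module.finrank K ((homogeneousSubmodule (ι × ι) K 0).map (comorphism ι K).toLinearMap) = 1 := by
  rw [map_comorphism_homogeneousSubmodule, pow_zero, Submodule.one_eq_span,
    finrank_span_singleton one_ne_zero]

theorem finrank_map_comorphism_succ_add_one {K : Type*} [Field K]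
    (hι : 3 ≤ Fintype.card ι) (d : ℕ) :
    Module.finrank K
        ((homogeneousSubmodule (ι × ι) K (d + 1)).map (comorphism ι K).toLinearMap) + 1 =
      ∑ k ∈ Finset.range (d + 2), (Fintype.card ι).multichoose k ^ 2 := by
  obtain ⟨i⟩ : Nonempty ι := Fintype.card_pos_iff.mp (by omega)
  rw [← card_weight_bidegree_eq, ← finrank_weightedHomogeneousSubmodule (R := K),
    ← bidegreeOne_pow, bidegreeOne_pow_succ_eq hι i,
    finrank_sup_span_singleton (X_pow_mul_notMem_map_comorphism _ d i)]

theorem eval_comorphism (f : MvPolynomial (ι × ι) R) (c : Option (ι ⊕ ι) → R) :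
    eval c (comorphism ι R f) =
      eval (fun p => scalarAddVecMulVec (c none) (fun i => c (some (.inl i)))
        (fun i => c (some (.inr i))) p.1 p.2) f := by
  have h : (aeval c).comp (comorphism ι R) = aeval fun p : ι × ι => scalarAddVecMulVec (c none)
      (fun i => c (some (.inl i))) (fun i => c (some (.inr i))) p.1 p.2 := by
    refine algHom_ext fun ⟨i, j⟩ => ?_
    rcases eq_or_ne i j with rfl | hij
    · simp [comorphism, scalarAddVecMulVec_apply_self]
    · simp [comorphism, scalarAddVecMulVec_apply_of_ne hij]
  exact DFunLike.congr_fun h f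

theorem comorphism_eq_zero_iff [IsDomain R] [Infinite R] {f : MvPolynomial (ι × ι) R} :
    comorphism ι R f = 0 ↔
      ∀ l x y, eval (fun p : ι × ι => scalarAddVecMulVec l x y p.1 p.2) f = 0 := by
  constructor
  · intro hf l x y
    simpa [hf] using (eval_comorphism f fun v => v.elim l (Sum.elim x y)).symm
  · intro hf
    refine MvPolynomial.funext fun c => ?_
    rw [eval_comorphism, hf, map_zero]

theorem comorphism_eq_zero_iff_forall_not_linearIndependent {K : Type*} [Field K] [IsAlgClosed K]
    (hι : Fintype.card ι ≤ 3) {f : MvPolynomial (ι × ι) K} :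
    comorphism ι K f = 0 ↔ ∀ A : Matrix ι ι K,
      ¬ LinearIndependent K (fun r : Fin 3 => A ^ (r : ℕ)) → eval (fun p => A p.1 p.2) f = 0 := by
  simp_rw [not_linearIndependent_pow_three_iff_exists_scalarAddVecMulVec hι]
  rw [comorphism_eq_zero_iff]
  exact ⟨fun hf _ ⟨l, x, y, hA⟩ => hA ▸ hf l x y, fun hf l x y => hf _ ⟨l, x, y, rfl⟩⟩

end Comorphism

end PolynomialRing

theorem multichoose_three (k : ℕ) : Nat.multichoose 3 k = (k + 2).choose 2 := by
  rw [Nat.multichoose_eq, show 3 + k - 1 = k + 2 by omega, Nat.choose_symm_add]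

section HilbertSeries

open PowerSeries

theorem one_sub_X_mul_mk {R : Type*} [Ring R] (h : ℕ → R) :
    (1 - X) * mk h = C (h 0) + X * mk fun d => h (d + 1) - h d := by
  ext d
  rw [sub_mul, one_mul]
  cases d <;> simp [coeff_succ_X_mul]

theorem mk_choose_two_sq :
    (mk fun k => ((k + 2).choose 2 : ℚ) ^ 2) =
      (mk fun k => ((4 + k).choose 4 : ℚ)) * (1 + 4 * X + X ^ 2) := by
  have choose_four (k : ℕ) :
      ((4 + k).choose 4 : ℚ) = (k + 4) * (k + 3) * (k + 2) * (k + 1) / 24 := by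
    simp only [Nat.cast_choose_eq_descPochhammer_div, descPochhammer_succ_eval,
      descPochhammer_zero, Polynomial.eval_one, Nat.factorial]
    push_cast
    ring
  have four_eq : (4 : PowerSeries ℚ) = C 4 := (map_ofNat C 4).symm
  rw [four_eq, mul_add, mul_add, mul_one, mul_left_comm]
  ext (_ | _ | k)
  · simp
  · norm_num [coeff_succ_mul_X, coeff_mul_X_pow', Nat.choose]
  · simp only [coeff_mk, map_add, coeff_C_mul, coeff_succ_mul_X, coeff_mul_X_pow',
      le_add_iff_nonneg_left, zero_le, ↓reduceIte, Nat.reduceSubDiff, choose_four,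
      Nat.cast_choose_two]
    push_cast
    ring

theorem one_sub_X_pow_five_mul_mk_choose_two_sq :
    (1 - X) ^ 5 * (mk fun k => ((k + 2).choose 2 : ℚ) ^ 2) = 1 + 4 * X + X ^ 2 := by
  rw [mk_choose_two_sq, ← mul_assoc, mul_comm ((1 - X) ^ 5),
    mk_add_choose_mul_one_sub_pow_eq_one, one_mul]

theorem one_sub_X_pow_six_mul_mk_of_sum_choose_two_sq {h : ℕ → ℚ} (h_zero : h 0 = 1)
    (h_succ : ∀ d, h (d + 1) + 1 = ∑ k ∈ Finset.range (d + 2), ((k + 2).choose 2 : ℚ) ^ 2) :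
    (1 - X) ^ 6 * mk h =
      1 + 3 * X + 6 * X ^ 2 - 10 * X ^ 3 + 10 * X ^ 4 - 5 * X ^ 5 + X ^ 6 := by
  have one_sub_mul : (1 - X) * mk h = (mk fun k => ((k + 2).choose 2 : ℚ) ^ 2) - X := by
    rw [one_sub_X_mul_mk]
    ext (_ | _ | d)
    · simp [h_zero]
    · simp [h_zero, eq_sub_of_add_eq (h_succ _), Finset.sum_range_succ,
        coeff_succ_X_mul]
    · simp [eq_sub_of_add_eq (h_succ _), Finset.sum_range_succ _ (d + 2),
        coeff_succ_X_mul, coeff_X]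
  calc (1 - X) ^ 6 * mk h = (1 - X) ^ 5 * ((1 - X) * mk h) := by ring
    _ = 1 + 4 * X + X ^ 2 - (1 - X) ^ 5 * X := by
      rw [one_sub_mul, mul_sub, one_sub_X_pow_five_mul_mk_choose_two_sq]
    _ = 1 + 3 * X + 6 * X ^ 2 - 10 * X ^ 3 + 10 * X ^ 4 - 5 * X ^ 5 + X ^ 6 := by ring

end HilbertSeries

theorem stmt_9_general {K : Type*} [Field K] [IsAlgClosed K]
    (V : Set (Matrix (Fin 3) (Fin 3) K))
    (hV : V = {A | ¬ LinearIndependent K (fun r : Fin 3 => A ^ (r : ℕ))})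
    (I : Ideal (MvPolynomial (Fin 3 × Fin 3) K))
    (hI : ∀ f : MvPolynomial (Fin 3 × Fin 3) K, f ∈ I ↔
      ∀ A ∈ V, MvPolynomial.eval (fun p => A p.1 p.2) f = 0)
    (h : ℕ → ℚ)
    (hh : ∀ d : ℕ, h d =
      (Module.finrank K ↥(MvPolynomial.homogeneousSubmodule (Fin 3 × Fin 3) K d) : ℚ)
      - (Module.finrank K
          ↥(MvPolynomial.homogeneousSubmodule (Fin 3 × Fin 3) K d ⊓
            Submodule.restrictScalars K I) : ℚ)) :
    (1 - PowerSeries.X : PowerSeries ℚ) ^ 6 * PowerSeries.mk h =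
      1 + 3 * PowerSeries.X + 6 * PowerSeries.X ^ 2 - 10 * PowerSeries.X ^ 3
        + 10 * PowerSeries.X ^ 4 - 5 * PowerSeries.X ^ 5 + PowerSeries.X ^ 6 := by
  have ker_eq : (comorphism (Fin 3) K).toLinearMap.ker = I.restrictScalars K := by
    ext f
    subst hV
    exact (comorphism_eq_zero_iff_forall_not_linearIndependent (Fintype.card_fin 3).le).trans
      (hI f).symm
  have h_eq (d : ℕ) : h d = Module.finrank K
      ((MvPolynomial.homogeneousSubmodule (Fin 3 × Fin 3) K d).map
        (comorphism (Fin 3) K).toLinearMap) := by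
    rw [hh, sub_eq_iff_eq_add, ← ker_eq]
    exact_mod_cast (finrank_map_add_finrank_inf_ker _ _).symm
  refine one_sub_X_pow_six_mul_mk_of_sum_choose_two_sq ?_ fun d => ?_
  · rw [h_eq, finrank_map_comorphism_zero, Nat.cast_one]
  · have hfinrank := finrank_map_comorphism_succ_add_one (ι := Fin 3) (K := K) le_rfl d
    simp only [Fintype.card_fin, multichoose_three] at hfinrank
    rw [h_eq]
    exact_mod_cast hfinrank

/-- The Hilbert series of the coordinate ring of the variety of `3×3` complex matrices
with minimal polynomial of degree at most `2` is
`(1 + 3t + 6t² - 10t³ + 10t⁴ - 5t⁵ + t⁶) / (1-t)⁶`. -/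
theorem stmt_9
    (V : Set (Matrix (Fin 3) (Fin 3) ℂ))
    (hV : V = {A | ¬ LinearIndependent ℂ (fun r : Fin 3 => A ^ (r : ℕ))})
    (I : Ideal (MvPolynomial (Fin 3 × Fin 3) ℂ))
    (hI : ∀ f : MvPolynomial (Fin 3 × Fin 3) ℂ, f ∈ I ↔
      ∀ A ∈ V, MvPolynomial.eval (fun p => A p.1 p.2) f = 0)
    (h : ℕ → ℚ)
    (hh : ∀ d : ℕ, h d =
      (Module.finrank ℂ ↥(MvPolynomial.homogeneousSubmodule (Fin 3 × Fin 3) ℂ d) : ℚ)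
      - (Module.finrank ℂ
          ↥(MvPolynomial.homogeneousSubmodule (Fin 3 × Fin 3) ℂ d ⊓
            Submodule.restrictScalars ℂ I) : ℚ)) :
    (1 - PowerSeries.X : PowerSeries ℚ) ^ 6 * PowerSeries.mk h =
      1 + 3 * PowerSeries.X + 6 * PowerSeries.X ^ 2 - 10 * PowerSeries.X ^ 3
        + 10 * PowerSeries.X ^ 4 - 5 * PowerSeries.X ^ 5 + PowerSeries.X ^ 6 :=
  stmt_9_general V hV I hI h hh
end

section
/- Identify polynomial functions on complex symmetric 3×3 matrices with the polynomial ring R' = MvPolynomial over the six indices {(i,j) : i ≤ j in Fin 3} over ℂ, the variable (i,j) evaluating to the (i,j) entry (= (j,i) entry) of a symmetric matrix. Let W = {A ∈ Matrix (Fin 3) (Fin 3) ℂ : Aᵀ = A and (I₃, A, A²) is linearly dependent over ℂ}, and let I(W) ⊂ R' be its vanishing ideal. Let S' ⊂ R' be the set of 3×3 minors of the 3×6 matrix over R' whose rows list the six entries b₁₁, b₁₂, b₁₃, b₂₂, b₂₃, b₃₃ of B, for B = I₃, B = the generic symmetric matrix, and B = its square, respectively. Then: (i) I(W) equals the ideal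 of R' generated by S' (in particular I(W) is generated by its degree-3 homogeneous component); (ii) the ℂ-linear span of S' equals the degree-3 homogeneous component of I(W); and (iii) this space has dimension 7 over ℂ. -/
open Matrix

/-!
Let `f` vanish at all matrices `v vᵀ + t I`. Then `f` also vanishes at `s + t I` for every symmetric
matrix `s` with vanishing `2 × 2` minors over every algebra: the polynomial `f (v vᵀ + t I)` in `v`
and `t` is zero, and it involves the `vᵢ` only through the products `vᵢ vⱼ`, which satisfy no other
relations than those minors.

Let `y` and `z` be the five coordinates modulo scalar matrices of the generic symmetric matrix `A`
and of `A²`. The maximal minors have the same span as the `2 × 2` minors of the rows `y` and `z`;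
let `J` be the ideal they generate in the polynomial ring `R`. A scalar `q` with `q y = z`, which
would be the sum of the two eigenvalues of `A`, can be adjoined to `R ⧸ J`: the `y i` form a regular
sequence, so every syzygy of `y` modulo `J` comes from Koszul syzygies and is one of `z`, and thus
`R ⧸ J` remains embedded. With `q` at hand `A - (tr A - q) I` has vanishing `2 × 2` minors, so `f`
vanishes at `A` modulo `J`, which says that `f ∈ J`.
-/

section

open MvPolynomial

section TwoRowMinor

variable {R ι : Type*} [CommRing R]

/-- The `2 × 2` minors of the two-row matrix with rows `y` and `z`, indexed by pairs of columns. -/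
def twoRowMinor (y z : ι → R) (p : ι × ι) : R := y p.1 * z p.2 - y p.2 * z p.1

theorem twoRowMinor_swap (y z : ι → R) (i j : ι) :
    twoRowMinor y z (j, i) = -twoRowMinor y z (i, j) := by
  simp only [twoRowMinor]
  ring

theorem map_twoRowMinor {S : Type*} [CommRing S] (φ : R →+* S) (y z : ι → R)
    (p : ι × ι) : φ (twoRowMinor y z p) = twoRowMinor (φ ∘ y) (φ ∘ z) p := by
  simp [twoRowMinor]

/-- The ideal of `2 × 2` minors of the two-row matrix with rows `y` and `z`. -/
def twoRowMinorIdeal (y z : ι → R) : Ideal R := Ideal.span (Set.range (twoRowMinor y z))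

theorem twoRowMinor_mem (y z : ι → R) (p : ι × ι) : twoRowMinor y z p ∈ twoRowMinorIdeal y z :=
  Ideal.subset_span ⟨p, rfl⟩

theorem exists_dotProduct_eq_of_mem_twoRowMinorIdeal [Fintype ι] {y z : ι → R} {x : R}
    (hx : x ∈ twoRowMinorIdeal y z) : ∃ k : ι → R, k ⬝ᵥ z = 0 ∧ k ⬝ᵥ y = x := by
  classical
  suffices h : twoRowMinorIdeal y z ≤ Submodule.map (Fintype.linearCombination R y)
      (LinearMap.ker (Fintype.linearCombination R z)) by
    simpa [Fintype.linearCombination_apply, dotProduct] using h hx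
  rw [twoRowMinorIdeal, Ideal.span_le]
  rintro _ ⟨⟨i, j⟩, rfl⟩
  refine ⟨Pi.single i (z j) - Pi.single j (z i), ?_, ?_⟩
  · simp [Fintype.linearCombination_apply_single, mul_comm]
  · simp [Fintype.linearCombination_apply_single, twoRowMinor, mul_comm]

/-- Every member of the family `y` is a nonzerodivisor modulo the ideal generated by any finite set
of other members, i.e. `y` is a weakly regular sequence in every order. -/
def IsPermutablyRegular (y : ι → R) : Prop :=
  ∀ (s : Finset ι), ∀ i ∉ s, ∀ r, r * y i ∈ Ideal.span (y '' s) → r ∈ Ideal.span (y '' s)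

namespace IsPermutablyRegular

theorem X_comp {σ : Type*} {e : ι → σ} (he : Function.Injective e) :
    IsPermutablyRegular fun i => (X (e i) : MvPolynomial σ R) := by
  intro s i hi r hr
  have image_X : (fun i => (X (e i) : MvPolynomial σ R)) '' s = X '' (e '' s) :=
    (Set.image_image X e s).symm
  rw [image_X, mem_ideal_span_X_image] at hr ⊢
  intro m hm
  obtain ⟨_, ⟨j, hj, rfl⟩, hmj⟩ := hr (m + Finsupp.single (e i) 1) <| by
    rw [support_mul_X]
    exact Finset.mem_map_of_mem _ hm
  have hij : e i ≠ e j := fun h => hi (he h ▸ hj)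
  exact ⟨e j, ⟨j, hj, rfl⟩, by simpa [hij] using hmj⟩

theorem map_ringEquiv {R' : Type*} [CommRing R'] (τ : R ≃+* R') {y : ι → R}
    (hy : IsPermutablyRegular y) : IsPermutablyRegular fun i => τ (y i) := by
  intro s i hi r hr
  have span_eq : Ideal.span ((fun i => τ (y i)) '' s) = (Ideal.span (y '' s)).comap τ.symm := by
    rw [← Ideal.map_comap_of_equiv, Ideal.map_span, Set.image_image]
    rfl
  rw [span_eq, Ideal.mem_comap] at hr ⊢
  exact hy s i hi _ (by simpa using hr)

theorem sum_mul_mem {y : ι → R} (hy : IsPermutablyRegular y) (z : ι → R) (s : Finset ι)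
    (h : ι → R) (hs : ∑ i ∈ s, h i * y i = 0) : ∑ i ∈ s, h i * z i ∈ twoRowMinorIdeal y z := by
  classical
  induction s using Finset.induction_on generalizing h with
  | empty => simp
  | insert k s hk ih =>
    rw [Finset.sum_insert hk] at hs ⊢
    have h_k_mem : h k ∈ Ideal.span (y '' s) := by
      refine hy s k hk _ ?_
      rw [eq_neg_of_add_eq_zero_left hs]
      exact neg_mem (Ideal.sum_mem _ fun i hi =>
        Ideal.mul_mem_left _ _ (Ideal.subset_span ⟨i, hi, rfl⟩))
    obtain ⟨c, hc⟩ := (Submodule.mem_span_image_finset_iff_exists_fun' R).mp h_k_mem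
    simp only [smul_eq_mul] at hc
    have reduced : ∑ i ∈ s, (h i + c i * y k) * y i = 0 := by
      rw [← hs, ← hc, Finset.sum_mul, add_comm, ← Finset.sum_add_distrib]
      exact Finset.sum_congr rfl fun i _ => by ring
    have split : h k * z k + ∑ i ∈ s, h i * z i =
        ∑ i ∈ s, (h i + c i * y k) * z i + ∑ i ∈ s, c i * twoRowMinor y z (i, k) := by
      rw [← hc, Finset.sum_mul, ← Finset.sum_add_distrib, ← Finset.sum_add_distrib]
      exact Finset.sum_congr rfl fun i _ => by simp only [twoRowMinor]; ring
    rw [split]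
    exact add_mem (ih _ reduced)
      (Ideal.sum_mem _ fun i _ => Ideal.mul_mem_left _ _ (twoRowMinor_mem y z _))

theorem dotProduct_mem [Fintype ι] {y z : ι → R} (hy : IsPermutablyRegular y) {h : ι → R}
    (hh : h ⬝ᵥ y ∈ twoRowMinorIdeal y z) : h ⬝ᵥ z ∈ twoRowMinorIdeal y z := by
  obtain ⟨k, hkz, hky⟩ := exists_dotProduct_eq_of_mem_twoRowMinorIdeal hh
  have key : (h - k) ⬝ᵥ z ∈ twoRowMinorIdeal y z :=
    hy.sum_mul_mem z Finset.univ (h - k) <| show (h - k) ⬝ᵥ y = 0 by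
      rw [sub_dotProduct, hky, sub_self]
  rwa [sub_dotProduct, hkz, sub_zero] at key

end IsPermutablyRegular

end TwoRowMinor

section Adjunction

universe u

variable {B : Type u} [CommRing B] {ι : Type*} [Fintype ι]

/-- The kernel of the passage from `B[q]`, where `q² = d + e q`, to the ring in which moreover
`q y = z`: it consists of the elements `∑ hᵢ (yᵢ q - zᵢ)` with `hᵢ ∈ B`. That these are closed under
multiplication by `q` is witnessed by the matrix `L` of multiplication by `q` on the ideal
generated by the `yᵢ`. -/
def adjunctionIdeal (y z : ι → B) (d e : B) (L : Matrix ι ι B) (hy : L *ᵥ y = z)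
    (hz : L *ᵥ z = d • y + e • z) : Ideal (QuadraticAlgebra B d e) where
  carrier := {g | ∃ h : ι → B, g.im = h ⬝ᵥ y ∧ g.re = -(h ⬝ᵥ z)}
  zero_mem' := ⟨0, by simp⟩
  add_mem' := by
    rintro g g' ⟨h, him, hre⟩ ⟨h', him', hre'⟩
    exact ⟨h + h', by simp [him, him'], by simp [hre, hre', add_comm]⟩
  smul_mem' := by
    rintro x g ⟨h, him, hre⟩
    refine ⟨(x.re + e * x.im) • h - x.im • h ᵥ* L, ?_, ?_⟩
    · simp only [smul_eq_mul, QuadraticAlgebra.im_mul, him, hre, sub_dotProduct, smul_dotProduct,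
        ← dotProduct_mulVec, hy]
      ring
    · simp only [smul_eq_mul, QuadraticAlgebra.re_mul, him, hre, sub_dotProduct, smul_dotProduct,
        ← dotProduct_mulVec, hz, dotProduct_add, dotProduct_smul]
      ring

theorem exists_injective_ringHom_mul_eq {y z : ι → B} {d e : B} (L : Matrix ι ι B)
    (hy : L *ᵥ y = z) (hz : L *ᵥ z = d • y + e • z)
    (syzygy : ∀ h : ι → B, h ⬝ᵥ y = 0 → h ⬝ᵥ z = 0) :
    ∃ (E : Type u) (_ : CommRing E) (φ : B →+* E) (q : E),
      Function.Injective φ ∧ q ^ 2 = φ d + φ e * q ∧ ∀ i, q * φ (y i) = φ (z i) := by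
  classical
  let I := adjunctionIdeal y z d e L hy hz
  let φ : B →+* QuadraticAlgebra B d e ⧸ I := (Ideal.Quotient.mk I).comp (algebraMap B _)
  let ω : QuadraticAlgebra B d e := ⟨0, 1⟩
  refine ⟨_, _, φ, Ideal.Quotient.mk I ω, ?_, ?_, fun i => ?_⟩
  · refine (injective_iff_map_eq_zero φ).mpr fun b hb => ?_
    obtain ⟨h, him, hre⟩ := Ideal.Quotient.eq_zero_iff_mem.mp hb
    replace him : h ⬝ᵥ y = 0 := him.symm
    replace hre : b = -(h ⬝ᵥ z) := hre
    rw [hre, syzygy h him, neg_zero]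
  · have ω_sq : ω ^ 2 = algebraMap B _ d + algebraMap B _ e * ω := by
      ext <;> simp [ω, sq]
    exact congrArg (Ideal.Quotient.mk I) ω_sq
  · have relation_mem : ω * algebraMap B _ (y i) - algebraMap B _ (z i) ∈ I :=
      ⟨Pi.single i 1, by simp [ω], by simp [ω]⟩
    exact Ideal.Quotient.eq.mpr relation_mem

end Adjunction

/-- The positions on and above the diagonal, which index the entries of a symmetric matrix. -/
abbrev UpperIndex (ι : Type*) [LE ι] : Type _ := {p : ι × ι // p.1 ≤ p.2}

/-- The entries of a matrix on and above the diagonal, which are the values of the coordinate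
functions at a symmetric matrix. -/
def entries {ι R : Type*} [LE ι] (A : Matrix ι ι R) (p : UpperIndex ι) : R := A p.1.1 p.1.2

section RankOne

variable {E ι : Type*} [CommRing E]

/-- The matrix `s` is symmetric and all its `2 × 2` minors vanish, as is the case for `s = v vᵀ`. -/
structure IsSymmRankOne (s : Matrix ι ι E) : Prop where
  symm : ∀ i j, s i j = s j i
  exchange : ∀ i j k l, s i j * s k l = s i k * s j l

/-- The value at `s = v vᵀ` of the monomial `v i₁ ⋯ v iₙ`, read off the entries of `s` by pairing
consecutive indices. Monomials of odd degree, which are not determined by `s`, are sent to `0`. -/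
def pairProd (s : Matrix ι ι E) : List ι → E
  | [] => 1
  | [_] => 0
  | i :: j :: l => s i j * pairProd s l

/-- The matrix `v vᵀ + t I` for generic `v` and `t`. -/
noncomputable def genericShiftedSquare (ι K : Type*) [DecidableEq ι] [CommRing K] :
    Matrix ι ι (MvPolynomial (Option ι) K) :=
  vecMulVec (fun i => X (some i)) (fun i => X (some i)) + (X none : MvPolynomial (Option ι) K) • 1

variable {K : Type*} [CommRing K] [Algebra K E]

variable (K) in
/-- The `K`-linear map which evaluates polynomials of even degree in the variables `some i` at a
vector `v` with `v vᵀ = s`, whether or not such a vector exists, and the variable `none` at `t`. -/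
noncomputable def evalSqrt (s : Matrix ι ι E) (t : E) :
    MvPolynomial (Option ι) K →ₗ[K] E :=
  (basisMonomials (Option ι) K).constr K fun m =>
    t ^ m none * pairProd s (Finsupp.toMultiset m.some).toList

theorem evalSqrt_monomial (s : Matrix ι ι E) (t : E) (m : Option ι →₀ ℕ) :
    evalSqrt K s t (monomial m 1) = t ^ m none * pairProd s (Finsupp.toMultiset m.some).toList := by
  simpa only [evalSqrt, coe_basisMonomials] using (basisMonomials (Option ι) K).constr_basis K _ m

theorem evalSqrt_one (s : Matrix ι ι E) (t : E) : evalSqrt K s t 1 = 1 := by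
  have h := evalSqrt_monomial (K := K) s t 0
  simpa [pairProd] using h

theorem evalSqrt_mul_X_none (s : Matrix ι ι E) (t : E) (p : MvPolynomial (Option ι) K) :
    evalSqrt K s t (p * X none) = evalSqrt K s t p * t := by
  suffices (evalSqrt K s t) ∘ₗ LinearMap.mulRight K (X none) =
      LinearMap.mulRight K t ∘ₗ (evalSqrt K s t) from LinearMap.congr_fun this p
  refine (basisMonomials _ K).ext fun m => ?_
  simp only [coe_basisMonomials, LinearMap.comp_apply, LinearMap.mulRight_apply, X,
    monomial_mul, mul_one, evalSqrt_monomial]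
  simp [pow_succ, mul_right_comm]

namespace IsSymmRankOne

theorem pairProd_perm {s : Matrix ι ι E} (hs : IsSymmRankOne s) {l l' : List ι} (h : l.Perm l') :
    pairProd s l = pairProd s l' := by
  suffices pairProd s l = pairProd s l' ∧ ∀ a, pairProd s (a :: l) = pairProd s (a :: l') from
    this.1
  induction h with
  | nil => exact ⟨rfl, fun _ => rfl⟩
  | cons x _ ih => exact ⟨ih.2 x, fun a => congrArg (s a x * ·) ih.1⟩
  | trans _ _ ih ih' => exact ⟨ih.1.trans ih'.1, fun a => (ih.2 a).trans (ih'.2 a)⟩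
  | swap x y l =>
    refine ⟨congrArg (· * pairProd s l) (hs.symm y x), fun a => ?_⟩
    cases l with
    | nil => simp only [pairProd, mul_zero]
    | cons b l => simp only [pairProd, ← mul_assoc, hs.exchange a y x b]

theorem evalSqrt_mul_X_some_mul_X_some {s : Matrix ι ι E} (hs : IsSymmRankOne s) (t : E)
    (p : MvPolynomial (Option ι) K) (i j : ι) :
    evalSqrt K s t (p * (X (some i) * X (some j))) = evalSqrt K s t p * s i j := by
  suffices (evalSqrt K s t) ∘ₗ LinearMap.mulRight K (X (some i) * X (some j)) =
      LinearMap.mulRight K (s i j) ∘ₗ (evalSqrt K s t) from LinearMap.congr_fun this p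
  refine (basisMonomials _ K).ext fun m => ?_
  have pairing (M : Multiset ι) :
      pairProd s (M + ({i} + {j})).toList = s i j * pairProd s M.toList :=
    hs.pairProd_perm (l' := i :: j :: M.toList) <| by
      rw [← Multiset.coe_eq_coe, ← Multiset.cons_coe, ← Multiset.cons_coe]
      simp [add_comm M]
  simp only [coe_basisMonomials, LinearMap.comp_apply, LinearMap.mulRight_apply, X,
    monomial_mul, mul_one, evalSqrt_monomial]
  have none_eq : (m + (.single (some i) 1 + .single (some j) 1)) none = m none := by simp
  rw [none_eq, Finsupp.some_add, Finsupp.some_add, Finsupp.some_single_some,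
    Finsupp.some_single_some, map_add, map_add, Finsupp.toMultiset_single,
    Finsupp.toMultiset_single, one_smul, one_smul, pairing]
  ring

theorem evalSqrt_mul_genericShiftedSquare [DecidableEq ι] {s : Matrix ι ι E}
    (hs : IsSymmRankOne s) (t : E) (p : MvPolynomial (Option ι) K) (i j : ι) :
    evalSqrt K s t (p * genericShiftedSquare ι K i j) = evalSqrt K s t p * (s + t • 1) i j := by
  by_cases hij : i = j <;>
    simp [genericShiftedSquare, vecMulVec_apply, hij, mul_add, evalSqrt_mul_X_none,
      hs.evalSqrt_mul_X_some_mul_X_some]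

variable [LinearOrder ι]

theorem evalSqrt_aeval_entries {s : Matrix ι ι E} (hs : IsSymmRankOne s) (t : E)
    (f : MvPolynomial (UpperIndex ι) K) :
    evalSqrt K s t (aeval (entries (genericShiftedSquare ι K)) f) =
      aeval (entries (s + t • 1)) f := by
  induction f using MvPolynomial.induction_on with
  | C a =>
    rw [aeval_C, aeval_C, Algebra.algebraMap_eq_smul_one, map_smul, evalSqrt_one,
      Algebra.algebraMap_eq_smul_one]
  | add f g hf hg => simp only [map_add, hf, hg]
  | mul_X f p hf =>
    simp only [map_mul, aeval_X, entries, ← hf]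
    exact hs.evalSqrt_mul_genericShiftedSquare t _ _ _

theorem aeval_entries_add_smul_one_eq_zero [IsDomain K] [Infinite K]
    {f : MvPolynomial (UpperIndex ι) K}
    (hf : ∀ (v : ι → K) (t : K), eval (entries (vecMulVec v v + t • 1)) f = 0)
    {s : Matrix ι ι E} (hs : IsSymmRankOne s) (t : E) : aeval (entries (s + t • 1)) f = 0 := by
  have generic_eq_zero : aeval (entries (genericShiftedSquare ι K)) f = 0 := by
    refine MvPolynomial.funext fun x => ?_
    have eval_entries : (fun p => aeval x (entries (genericShiftedSquare ι K) p)) =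
        entries (vecMulVec (fun i => x (some i)) (fun i => x (some i)) + x none • 1) := by
      ext p
      by_cases hp : p.1.1 = p.1.2 <;>
        simp [entries, genericShiftedSquare, vecMulVec_apply, hp]
    rw [map_zero, ← coe_aeval_eq_eval, RingHom.coe_coe, comp_aeval_apply, eval_entries]
    exact hf _ _
  rw [← hs.evalSqrt_aeval_entries, generic_eq_zero, map_zero]

end IsSymmRankOne

end RankOne

section ModScalar

variable {R : Type*} [CommRing R]

theorem adjugate_fin_three_apply (s : Matrix (Fin 3) (Fin 3) R) (i j : Fin 3) :
    s.adjugate j i =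
      s (i + 1) (j + 1) * s (i + 2) (j + 2) - s (i + 1) (j + 2) * s (i + 2) (j + 1) := by
  fin_cases i <;> fin_cases j <;> simp [adjugate_fin_three] <;> ring

theorem isSymmRankOne_of_adjugate_eq_zero {s : Matrix (Fin 3) (Fin 3) R} (hs : s.IsSymm)
    (hadj : s.adjugate = 0) : IsSymmRankOne s where
  symm i j := hs.apply j i
  exchange i j k l := by
    have cofactor (i j : Fin 3) := (adjugate_fin_three_apply s i j).symm.trans (congrFun₂ hadj j i)
    simp only [Matrix.zero_apply] at cofactor
    have eq_or_cyclic (i l : Fin 3) :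
        i = l ∨ ∃ m, (i = m + 1 ∧ l = m + 2) ∨ (i = m + 2 ∧ l = m + 1) := by
      decide +revert
    rw [hs.apply l k, hs.apply l j]
    obtain rfl | ⟨m, ⟨rfl, rfl⟩ | ⟨rfl, rfl⟩⟩ := eq_or_cyclic i l
    · ring
    all_goals obtain rfl | ⟨n, ⟨rfl, rfl⟩ | ⟨rfl, rfl⟩⟩ := eq_or_cyclic j k
    · rfl
    · linear_combination cofactor m n
    · linear_combination -cofactor m n
    · rfl
    · linear_combination -cofactor m n
    · linear_combination cofactor m n

/-- Five coordinates of a symmetric `3 × 3` matrix, vanishing exactly on the scalar matrices. -/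
def modScalar (A : Matrix (Fin 3) (Fin 3) R) : Fin 5 → R :=
  ![A 0 1, A 0 2, A 1 2, A 0 0 - A 2 2, A 1 1 - A 2 2]

/-- A matrix which takes the coordinates of `A` to those of `A²`, and hence represents the
multiplication by a scalar `q` with `A² ≡ q A` modulo the scalar matrices, whenever `q` exists. -/
def ratioMatrix (A : Matrix (Fin 3) (Fin 3) R) : Matrix (Fin 5) (Fin 5) R :=
  let g := A 0 0 + A 1 1
  let u := A 0 0 - A 2 2
  let w := A 1 1 - A 2 2
  !![g + u, 0, A 0 2, -A 0 1, 0;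
     0, g + u, A 0 1, -A 0 2, -A 0 2;
     0, A 0 1, g + w, -A 1 2, -A 1 2;
     A 0 1, 0, -A 1 2, g, -u;
     A 0 1, -A 0 2, 0, -w, g]

/-- The coefficient `e` in the equation `q² = d + e q` satisfied by the sum `q = 2 t + v ⬝ᵥ v` of
the two eigenvalues of `A = v vᵀ + t I`. Since `q - A 0 0 - A 1 1 = v₂²`, and since `v₂⁴` is a
quadratic polynomial in the coordinates `v₀ v₁`, `v₀ v₂`, `v₁ v₂`, `v₀² - v₂²`, `v₁² - v₂²` of `A`,
it is obtained by expanding `(q - A 0 0 - A 1 1)² = v₂⁴`. -/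
def ratioTrace (A : Matrix (Fin 3) (Fin 3) R) : R := 2 * (A 0 0 + A 1 1)

/-- The coefficient `d` in the equation `q² = d + e q` of `ratioTrace`. -/
def ratioConst (A : Matrix (Fin 3) (Fin 3) R) : R :=
  A 0 2 ^ 2 + A 1 2 ^ 2 - A 0 1 ^ 2 + (A 0 0 - A 2 2) * (A 1 1 - A 2 2) - (A 0 0 + A 1 1) ^ 2

variable {A : Matrix (Fin 3) (Fin 3) R}

theorem modScalar_sq (hA : A.IsSymm) : modScalar (A ^ 2) =
    ![A 0 0 * A 0 1 + A 0 1 * A 1 1 + A 0 2 * A 1 2,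
      A 0 0 * A 0 2 + A 0 1 * A 1 2 + A 0 2 * A 2 2,
      A 0 1 * A 0 2 + A 1 1 * A 1 2 + A 1 2 * A 2 2,
      A 0 0 ^ 2 + A 0 1 ^ 2 - A 1 2 ^ 2 - A 2 2 ^ 2,
      A 0 1 ^ 2 + A 1 1 ^ 2 - A 0 2 ^ 2 - A 2 2 ^ 2] := by
  ext i
  fin_cases i <;>
    simp [modScalar, sq, mul_apply, Fin.sum_univ_three, hA.apply 0 1, hA.apply 0 2,
      hA.apply 1 2] <;>
    ring

theorem ratioMatrix_mulVec_modScalar (hA : A.IsSymm) :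
    ratioMatrix A *ᵥ modScalar A = modScalar (A ^ 2) := by
  rw [modScalar_sq hA]
  ext i
  fin_cases i <;>
    simp [ratioMatrix, modScalar, mulVec, dotProduct, Fin.sum_univ_five] <;> ring

theorem ratioMatrix_mulVec_modScalar_sq (hA : A.IsSymm) :
    ratioMatrix A *ᵥ modScalar (A ^ 2) =
      ratioConst A • modScalar A + ratioTrace A • modScalar (A ^ 2) := by
  rw [modScalar_sq hA]
  ext i
  fin_cases i <;>
    simp [ratioMatrix, ratioConst, ratioTrace, modScalar, mulVec, dotProduct, Fin.sum_univ_five] <;>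
    ring

theorem eq_smul_one_of_modScalar_eq_zero {B : Matrix (Fin 3) (Fin 3) R} (hB : B.IsSymm)
    (h : modScalar B = 0) : B = B 2 2 • 1 := by
  have h01 : B 0 1 = 0 := congrFun h 0
  have h02 : B 0 2 = 0 := congrFun h 1
  have h12 : B 1 2 = 0 := congrFun h 2
  have h00 : B 0 0 = B 2 2 := sub_eq_zero.mp (congrFun h 3)
  have h11 : B 1 1 = B 2 2 := sub_eq_zero.mp (congrFun h 4)
  ext i j
  fin_cases i <;> fin_cases j <;>
    simp [h00, h11, h01, h02, h12, hB.apply 0 1, hB.apply 0 2, hB.apply 1 2]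

theorem modScalar_adjugate_sub_smul_one (hA : A.IsSymm) (q : R) :
    modScalar (A - (A.trace - q) • 1).adjugate = modScalar (A ^ 2) - q • modScalar A := by
  rw [modScalar_sq hA]
  ext i
  fin_cases i <;>
    simp [modScalar, adjugate_fin_three, trace_fin_three, hA.apply 0 1, hA.apply 0 2,
      hA.apply 1 2] <;>
    ring

theorem adjugate_sub_smul_one_apply_two_two (hA : A.IsSymm) {q : R}
    (hq : ∀ i, q * modScalar A i = modScalar (A ^ 2) i)
    (hqq : q ^ 2 = ratioConst A + ratioTrace A * q) :
    (A - (A.trace - q) • 1).adjugate 2 2 = 0 := by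
  rw [modScalar_sq hA] at hq
  have hq00 := hq 3
  have hq11 := hq 4
  simp only [modScalar, cons_val] at hq00 hq11
  rw [ratioConst, ratioTrace] at hqq
  simp only [adjugate_fin_three, trace_fin_three, of_apply, cons_val, Matrix.sub_apply,
    Matrix.smul_apply, one_apply, smul_eq_mul, Fin.reduceEq, if_true, if_false, hA.apply 0 1]
  linear_combination hqq + hq00 + hq11

theorem isSymmRankOne_sub_smul_one (hA : A.IsSymm) {q : R}
    (hq : ∀ i, q * modScalar A i = modScalar (A ^ 2) i)
    (hqq : q ^ 2 = ratioConst A + ratioTrace A * q) :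
    IsSymmRankOne (A - (A.trace - q) • 1) := by
  have hs : (A - (A.trace - q) • 1).IsSymm := hA.sub (isSymm_one.smul _)
  refine isSymmRankOne_of_adjugate_eq_zero hs ?_
  have modScalar_eq_zero : modScalar (A - (A.trace - q) • 1).adjugate = 0 := by
    rw [modScalar_adjugate_sub_smul_one hA, sub_eq_zero]
    exact (funext hq).symm
  rw [eq_smul_one_of_modScalar_eq_zero hs.adjugate modScalar_eq_zero,
    adjugate_sub_smul_one_apply_two_two hA hq hqq, zero_smul]

end ModScalar

section Shear

variable {σ R : Type*} [CommRing R]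

/-- The endomorphism `X p ↦ X p + c p • X i₀` of a polynomial ring. -/
noncomputable def shear (i₀ : σ) (c : σ → R) : MvPolynomial σ R →ₐ[R] MvPolynomial σ R :=
  aeval fun p => X p + c p • X i₀

theorem shear_comp_shear_neg {i₀ : σ} {c : σ → R} (hc : c i₀ = 0) :
    (shear i₀ c).comp (shear i₀ (-c)) = AlgHom.id R (MvPolynomial σ R) := by
  ext p
  simp [shear, hc]

/-- The automorphism `X p ↦ X p + c p • X i₀` of a polynomial ring, where `c i₀ = 0`. -/
noncomputable def shearEquiv (i₀ : σ) (c : σ → R) (hc : c i₀ = 0) :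
    MvPolynomial σ R ≃ₐ[R] MvPolynomial σ R :=
  AlgEquiv.ofAlgHom (shear i₀ c) (shear i₀ (-c)) (shear_comp_shear_neg hc) <| by
    have h := shear_comp_shear_neg (c := -c) (show (-c) i₀ = 0 by simp [hc])
    rwa [neg_neg] at h

end Shear

section GenericSymm

/-- The symmetric matrix whose entries on and above the diagonal are independent variables. -/
noncomputable def genericSymm (ι K : Type*) [LinearOrder ι] [CommRing K] :
    Matrix ι ι (MvPolynomial (UpperIndex ι) K) :=
  of fun i j => X ⟨(min i j, max i j), min_le_max⟩

variable {ι K E : Type*} [LinearOrder ι] [CommRing K]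

theorem isSymm_genericSymm : (genericSymm ι K).IsSymm :=
  IsSymm.ext fun i j => by simp only [genericSymm, of_apply, min_comm, max_comm]

theorem entries_genericSymm : entries (genericSymm ι K) = X := by
  ext1 ⟨⟨i, j⟩, hij⟩
  simp only [entries, genericSymm, of_apply, min_eq_left hij, max_eq_right hij]

theorem map_genericSymm [CommRing E] {A : Matrix ι ι E} (hA : A.IsSymm)
    (φ : MvPolynomial (UpperIndex ι) K →+* E) (hφ : ∀ p, φ (X p) = entries A p) :
    (genericSymm ι K).map φ = A := by
  ext i j
  obtain h | h := le_total i j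
  · simp [genericSymm, hφ, entries, h]
  · simp [genericSymm, hφ, entries, h, hA.apply i j]

variable {R : Type*} [CommRing R]

theorem modScalar_map [CommRing E] (A : Matrix (Fin 3) (Fin 3) R) (φ : R →+* E) :
    modScalar (A.map φ) = φ ∘ modScalar A := by
  ext i
  fin_cases i <;> simp [modScalar]

/-- The positions whose entries modulo scalars are listed by `modScalar`. -/
def modScalarIndex : Fin 5 → UpperIndex (Fin 3) :=
  ![⟨(0, 1), by decide⟩, ⟨(0, 2), by decide⟩, ⟨(1, 2), by decide⟩,
    ⟨(0, 0), by decide⟩, ⟨(1, 1), by decide⟩]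

theorem modScalarIndex_injective : Function.Injective modScalarIndex := by decide

theorem isPermutablyRegular_modScalar_genericSymm :
    IsPermutablyRegular (modScalar (genericSymm (Fin 3) K)) := by
  let τ := shearEquiv (R := K) (σ := UpperIndex (Fin 3)) ⟨(2, 2), le_rfl⟩
    (fun p => if p.1 = (0, 0) ∨ p.1 = (1, 1) then -1 else 0) (if_neg (by decide))
  have modScalar_eq : modScalar (genericSymm (Fin 3) K) =
      fun i => τ.toRingEquiv (X (modScalarIndex i)) := by
    ext1 i
    fin_cases i <;>
      simp [τ, modScalar, genericSymm, shearEquiv, shear, modScalarIndex, sub_eq_add_neg]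
  rw [modScalar_eq]
  exact (IsPermutablyRegular.X_comp modScalarIndex_injective).map_ringEquiv τ.toRingEquiv

variable [IsDomain K] [Infinite K]

theorem aeval_entries_eq_zero_of_syzygy {B : Type*} [CommRing B] [Algebra K B]
    {f : MvPolynomial (UpperIndex (Fin 3)) K}
    (hf : ∀ (v : Fin 3 → K) (t : K), eval (entries (vecMulVec v v + t • 1)) f = 0)
    {A : Matrix (Fin 3) (Fin 3) B} (hA : A.IsSymm)
    (syzygy : ∀ h, h ⬝ᵥ modScalar A = 0 → h ⬝ᵥ modScalar (A ^ 2) = 0) :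
    aeval (entries A) f = 0 := by
  obtain ⟨E, _, φ, q, φ_injective, hqq, hq⟩ := exists_injective_ringHom_mul_eq (ratioMatrix A)
    (ratioMatrix_mulVec_modScalar hA) (ratioMatrix_mulVec_modScalar_sq hA) syzygy
  have rankOne : IsSymmRankOne (A.map φ - ((A.map φ).trace - q) • 1) := by
    refine isSymmRankOne_sub_smul_one (hA.map φ) (fun i => ?_) ?_
    · rw [← Matrix.map_pow, modScalar_map, modScalar_map]
      exact hq i
    · rw [hqq]
      simp [ratioConst, ratioTrace, map_ofNat φ 2]
  let _ := (φ.comp (algebraMap K B)).toAlgebra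
  let φ' : B →ₐ[K] E := { φ with commutes' := fun _ => rfl }
  have aeval_map_eq_zero := rankOne.aeval_entries_add_smul_one_eq_zero hf ((A.map φ).trace - q)
  rw [sub_add_cancel] at aeval_map_eq_zero
  refine φ_injective ((comp_aeval_apply _ φ' f).trans ?_)
  rw [map_zero]
  exact aeval_map_eq_zero

theorem mem_twoRowMinorIdeal_of_eval_eq_zero {f : MvPolynomial (UpperIndex (Fin 3)) K}
    (hf : ∀ (v : Fin 3 → K) (t : K), eval (entries (vecMulVec v v + t • 1)) f = 0) :
    f ∈ twoRowMinorIdeal (modScalar (genericSymm (Fin 3) K))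
      (modScalar (genericSymm (Fin 3) K ^ 2)) := by
  set J := twoRowMinorIdeal (modScalar (genericSymm (Fin 3) K))
    (modScalar (genericSymm (Fin 3) K ^ 2))
  let π : MvPolynomial (UpperIndex (Fin 3)) K →+* _ := Ideal.Quotient.mk J
  have syzygy (h) (hh : h ⬝ᵥ modScalar ((genericSymm (Fin 3) K).map π) = 0) :
      h ⬝ᵥ modScalar ((genericSymm (Fin 3) K).map π ^ 2) = 0 := by
    obtain ⟨h, rfl⟩ : ∃ h', π ∘ h' = h := Ideal.Quotient.mk_surjective.comp_left h
    rw [modScalar_map, ← RingHom.map_dotProduct, Ideal.Quotient.eq_zero_iff_mem] at hh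
    rw [← Matrix.map_pow, modScalar_map, ← RingHom.map_dotProduct, Ideal.Quotient.eq_zero_iff_mem]
    exact isPermutablyRegular_modScalar_genericSymm.dotProduct_mem hh
  have π_eq_aeval : π f = aeval (entries ((genericSymm (Fin 3) K).map π)) f := by
    have h := comp_aeval_apply X (Ideal.Quotient.mkₐ K J) f
    rwa [aeval_X_left_apply, ← entries_genericSymm] at h
  rw [← Ideal.Quotient.eq_zero_iff_mem]
  exact π_eq_aeval.trans (aeval_entries_eq_zero_of_syzygy hf (isSymm_genericSymm.map π) syzygy)

end GenericSymm

section PowerMinor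

variable {R : Type*} [CommRing R]

/-- The maximal minor on the columns `c` of the matrix whose rows list the entries of `I`, `A` and
`A²` on and above the diagonal. -/
def powerMinor (A : Matrix (Fin 3) (Fin 3) R) (c : Fin 3 → UpperIndex (Fin 3)) : R :=
  det (of fun r s : Fin 3 => (A ^ (r : ℕ)) (c s).1.1 (c s).1.2)

theorem map_powerMinor {S : Type*} [CommRing S] (φ : R →+* S) (A : Matrix (Fin 3) (Fin 3) R)
    (c : Fin 3 → UpperIndex (Fin 3)) : φ (powerMinor A c) = powerMinor (A.map φ) c := by
  rw [powerMinor, RingHom.map_det]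
  congr 1
  ext r s
  exact congrFun₂ (Matrix.map_pow A φ r) _ _

theorem powerMinor_eq_zero [IsDomain R] {A : Matrix (Fin 3) (Fin 3) R}
    (hA : ¬ LinearIndependent R (fun r : Fin 3 => A ^ (r : ℕ))) (c : Fin 3 → UpperIndex (Fin 3)) :
    powerMinor A c = 0 := by
  by_contra h
  let columns : Matrix (Fin 3) (Fin 3) R →ₗ[R] Fin 3 → R :=
    LinearMap.pi fun s => entryLinearMap R R (c s).1.1 (c s).1.2
  exact hA (.of_comp columns (linearIndependent_rows_of_det_ne_zero h))

/-- The maximal minors of the matrix whose rows list the entries of `I`, `A` and `A²` on and above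
the diagonal. -/
def powerMinors (A : Matrix (Fin 3) (Fin 3) R) : Set R :=
  {d | ∃ c, Function.Injective c ∧ d = powerMinor A c}

/-- Subtracting from `A` the scalar matrix with the same last diagonal entry. -/
def offScalar (A : Matrix (Fin 3) (Fin 3) R) : Matrix (Fin 3) (Fin 3) R := A - A 2 2 • 1

theorem powerMinor_eq_twoRowMinor (A : Matrix (Fin 3) (Fin 3) R) (c : Fin 3 → UpperIndex (Fin 3)) :
    let y := entries (offScalar A)
    let z := entries (offScalar (A ^ 2))
    let δ := entries (1 : Matrix (Fin 3) (Fin 3) R)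
    powerMinor A c = δ (c 0) * twoRowMinor y z (c 1, c 2) - δ (c 1) * twoRowMinor y z (c 0, c 2) +
      δ (c 2) * twoRowMinor y z (c 0, c 1) := by
  simp only [powerMinor, offScalar, det_fin_three, entries, twoRowMinor, of_apply, Matrix.sub_apply,
    Matrix.smul_apply, smul_eq_mul, Fin.val_zero, Fin.val_one, Fin.val_two, pow_zero, pow_one]
  ring

theorem entries_offScalar_modScalarIndex (A : Matrix (Fin 3) (Fin 3) R) (i : Fin 5) :
    entries (offScalar A) (modScalarIndex i) = modScalar A i := by
  fin_cases i <;> simp [entries, offScalar, modScalarIndex, modScalar]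

theorem entries_offScalar_last (A : Matrix (Fin 3) (Fin 3) R) :
    entries (offScalar A) ⟨(2, 2), le_rfl⟩ = 0 := by
  simp [entries, offScalar]

theorem eq_last_or_exists_modScalarIndex_eq (p : UpperIndex (Fin 3)) :
    p = ⟨(2, 2), le_rfl⟩ ∨ ∃ i, modScalarIndex i = p := by
  decide +revert

/-- The `2 × 2` minors of the two-row matrix of the coordinates modulo scalars of `A` and `A²`. -/
abbrev modScalarMinor (A : Matrix (Fin 3) (Fin 3) R) : Fin 5 × Fin 5 → R :=
  twoRowMinor (modScalar A) (modScalar (A ^ 2))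

variable (K : Type*) [CommRing K] [Algebra K R]

theorem twoRowMinor_offScalar_mem (A : Matrix (Fin 3) (Fin 3) R) (p q : UpperIndex (Fin 3)) :
    twoRowMinor (entries (offScalar A)) (entries (offScalar (A ^ 2))) (p, q) ∈
      Submodule.span K (Set.range (modScalarMinor A)) := by
  obtain rfl | ⟨i, rfl⟩ := eq_last_or_exists_modScalarIndex_eq p
  · simp [twoRowMinor, entries_offScalar_last]
  obtain rfl | ⟨j, rfl⟩ := eq_last_or_exists_modScalarIndex_eq q
  · simp [twoRowMinor, entries_offScalar_last]
  refine Submodule.subset_span ⟨(i, j), ?_⟩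
  simp only [twoRowMinor, entries_offScalar_modScalarIndex]

theorem powerMinor_mem_span (A : Matrix (Fin 3) (Fin 3) R) (c : Fin 3 → UpperIndex (Fin 3)) :
    powerMinor A c ∈ Submodule.span K (Set.range (modScalarMinor A)) := by
  have term_mem (p q r : UpperIndex (Fin 3)) : entries (1 : Matrix (Fin 3) (Fin 3) R) p *
      twoRowMinor (entries (offScalar A)) (entries (offScalar (A ^ 2))) (q, r) ∈
      Submodule.span K (Set.range (modScalarMinor A)) := by
    rw [entries, one_apply, ite_mul, one_mul, zero_mul]
    split_ifs
    exacts [twoRowMinor_offScalar_mem K A q r, zero_mem _]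
  rw [powerMinor_eq_twoRowMinor]
  exact add_mem (sub_mem (term_mem _ _ _) (term_mem _ _ _)) (term_mem _ _ _)

theorem modScalarMinor_eq_powerMinor (A : Matrix (Fin 3) (Fin 3) R) (i j : Fin 5) :
    modScalarMinor A (i, j) =
      powerMinor A ![⟨(2, 2), le_rfl⟩, modScalarIndex i, modScalarIndex j] := by
  have entry_one : entries (1 : Matrix (Fin 3) (Fin 3) R) ⟨(2, 2), le_rfl⟩ = 1 := one_apply_eq 2
  simp only [powerMinor_eq_twoRowMinor, modScalarMinor, twoRowMinor, cons_val, entry_one,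
    entries_offScalar_last, entries_offScalar_modScalarIndex]
  ring

theorem span_powerMinors (A : Matrix (Fin 3) (Fin 3) R) :
    Submodule.span K (powerMinors A) = Submodule.span K (Set.range (modScalarMinor A)) := by
  refine le_antisymm (Submodule.span_le.mpr ?_) (Submodule.span_le.mpr ?_)
  · rintro _ ⟨c, -, rfl⟩
    exact powerMinor_mem_span K A c
  · rintro _ ⟨⟨i, j⟩, rfl⟩
    obtain rfl | hij := eq_or_ne i j
    · simp [twoRowMinor]
    have columns_injective :
        Function.Injective ![⟨(2, 2), le_rfl⟩, modScalarIndex i, modScalarIndex j] := by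
      decide +revert
    exact Submodule.subset_span ⟨_, columns_injective, modScalarMinor_eq_powerMinor A i j⟩

theorem ideal_span_powerMinors (A : Matrix (Fin 3) (Fin 3) R) :
    Ideal.span (powerMinors A) = twoRowMinorIdeal (modScalar A) (modScalar (A ^ 2)) := by
  rw [twoRowMinorIdeal, Ideal.span, Ideal.span, ← Submodule.span_span_of_tower ℤ,
    span_powerMinors, Submodule.span_span_of_tower]

/-- Indices of seven of the `2 × 2` minors of the coordinates modulo scalars of `A` and `A²`. They
are a basis of the span of all ten, which satisfy three relations since `A` commutes with `A²`. -/
def basisPair : Fin 7 → Fin 5 × Fin 5 :=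
  ![(0, 1), (0, 2), (1, 2), (3, 0), (3, 2), (4, 1), (3, 4)]

theorem modScalarMinor_relations {A : Matrix (Fin 3) (Fin 3) R} (hA : A.IsSymm) :
    modScalarMinor A (3, 1) = -modScalarMinor A (0, 2) ∧
    modScalarMinor A (4, 2) = -modScalarMinor A (0, 1) ∧
    modScalarMinor A (4, 0) = modScalarMinor A (1, 2) + modScalarMinor A (3, 0) := by
  rw [modScalarMinor, modScalar_sq hA]
  simp only [twoRowMinor, modScalar, cons_val]
  refine ⟨?_, ?_, ?_⟩ <;> ring

theorem span_modScalarMinor_basisPair {A : Matrix (Fin 3) (Fin 3) R} (hA : A.IsSymm) :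
    Submodule.span K (Set.range (modScalarMinor A ∘ basisPair)) =
      Submodule.span K (Set.range (modScalarMinor A)) := by
  refine le_antisymm (Submodule.span_mono (Set.range_comp_subset_range _ _))
    (Submodule.span_le.mpr ?_)
  set V := Submodule.span K (Set.range (modScalarMinor A ∘ basisPair))
  have basis_mem (k : Fin 7) : modScalarMinor A (basisPair k) ∈ V := Submodule.subset_span ⟨k, rfl⟩
  obtain ⟨h31, h42, h40⟩ := modScalarMinor_relations hA
  have listed_mem (p) (hp : (∃ k, basisPair k = p) ∨ p = (3, 1) ∨ p = (4, 2) ∨ p = (4, 0)) :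
      modScalarMinor A p ∈ V := by
    obtain ⟨k, rfl⟩ | rfl | rfl | rfl := hp
    · exact basis_mem k
    · exact h31 ▸ neg_mem (basis_mem 1)
    · exact h42 ▸ neg_mem (basis_mem 0)
    · exact h40 ▸ add_mem (basis_mem 2) (basis_mem 3)
  have listed (i j : Fin 5) : i = j ∨
      ((∃ k, basisPair k = (i, j)) ∨ (i, j) = (3, 1) ∨ (i, j) = (4, 2) ∨ (i, j) = (4, 0)) ∨
      (∃ k, basisPair k = (j, i)) ∨ (j, i) = (3, 1) ∨ (j, i) = (4, 2) ∨ (j, i) = (4, 0) := by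
    decide +revert
  rintro _ ⟨⟨i, j⟩, rfl⟩
  obtain rfl | h | h := listed i j
  · simp [twoRowMinor]
  · exact listed_mem _ h
  · rw [modScalarMinor, twoRowMinor_swap]
    exact neg_mem (listed_mem _ h)

end PowerMinor

section LinearIndependent

variable {K : Type*} [CommRing K]

theorem eval_modScalarMinor_genericSymm {A : Matrix (Fin 3) (Fin 3) K} (hA : A.IsSymm)
    (p : Fin 5 × Fin 5) :
    eval (entries A) (modScalarMinor (genericSymm (Fin 3) K) p) = modScalarMinor A p := by
  rw [modScalarMinor, map_twoRowMinor, ← modScalar_map, ← modScalar_map, Matrix.map_pow,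
    map_genericSymm hA _ (eval_X (f := entries A))]

theorem linearIndependent_modScalarMinor_basisPair :
    LinearIndependent K (modScalarMinor (genericSymm (Fin 3) K) ∘ basisPair) := by
  refine Fintype.linearIndependent_iff.mpr fun g hg => ?_
  have eval_eq_zero (a b c u w : K) :
      ∑ k, g k * modScalarMinor !![u, a, b; a, w, c; b, c, 0] (basisPair k) = 0 := by
    have symm : !![u, a, b; a, w, c; b, c, 0].IsSymm := by
      ext i j
      fin_cases i <;> fin_cases j <;> rfl
    simpa only [map_sum, smul_eval, Function.comp_apply, eval_modScalarMinor_genericSymm symm,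
      map_zero] using congrArg (eval (entries !![u, a, b; a, w, c; b, c, 0])) hg
  simp only [Fin.sum_univ_seven, basisPair, twoRowMinor, modScalar, sq, cons_mul, cons_val,
    vecMul_cons, of_apply, head_cons, tail_cons, empty_vecMul, add_zero, smul_cons,
    smul_eq_mul, smul_empty, add_cons, empty_add_empty, empty_mul] at eval_eq_zero
  have h3 : g 3 = 0 := by simpa using eval_eq_zero 1 0 0 0 0
  have h5 : g 5 = 0 := by simpa using eval_eq_zero 0 1 0 0 0
  have h4 : g 4 = 0 := by simpa using eval_eq_zero 0 0 1 0 0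
  have h6 : g 6 = 0 := by simpa [h3] using eval_eq_zero 1 0 0 1 0
  have h01 : -g 0 + -g 1 = 0 := by simpa [h4, h5] using eval_eq_zero 0 1 1 0 0
  have h2 : g 2 = 0 := by simpa [h4, h5, h6, h01] using eval_eq_zero 0 1 1 0 1
  have h1 : g 1 = 0 := by simpa [h2, h3, h5] using eval_eq_zero 1 1 0 0 0
  have h0 : g 0 = 0 := by simpa [h1] using h01
  intro k
  fin_cases k
  exacts [h0, h1, h2, h3, h4, h5, h6]

end LinearIndependent

section Homogeneous

variable {σ R : Type*} [CommRing R]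

theorem homogeneousComponent_mul_of_isHomogeneous (a : MvPolynomial σ R) {s : MvPolynomial σ R}
    {n : ℕ} (hs : s.IsHomogeneous n) : homogeneousComponent n (a * s) = coeff 0 a • s := by
  let _ := gradedAlgebra (σ := σ) (R := R)
  have h := DirectSum.coe_decompose_mul_of_right_mem_of_le (homogeneousSubmodule σ R)
    (a := a) ((mem_homogeneousSubmodule n s).mpr hs) le_rfl
  rw [Nat.sub_self] at h
  rw [smul_eq_C_mul, ← homogeneousComponent_zero, ← decomposition.decompose'_apply,
    ← decomposition.decompose'_apply]
  exact h

theorem mem_submodule_span_of_mem_ideal_span {S : Set (MvPolynomial σ R)} {n : ℕ}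
    (hS : ∀ s ∈ S, s.IsHomogeneous n) {f : MvPolynomial σ R} (hf : f.IsHomogeneous n)
    (hfS : f ∈ Ideal.span S) : f ∈ Submodule.span R S := by
  obtain ⟨m, a, s, rfl⟩ := Submodule.mem_span_set'.mp hfS
  rw [← homogeneousComponent_of_mem hf |>.trans (if_pos rfl), map_sum]
  refine sum_mem fun i _ => ?_
  rw [smul_eq_mul, homogeneousComponent_mul_of_isHomogeneous _ (hS _ (s i).2)]
  exact Submodule.smul_mem _ _ (Submodule.subset_span (s i).2)

end Homogeneous

section GenericHomogeneous

variable {K : Type*} [CommRing K]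

theorem isHomogeneous_entry_genericSymm_pow {ι : Type*} [LinearOrder ι] [Fintype ι] (r : ℕ)
    (i j : ι) : ((genericSymm ι K ^ r) i j).IsHomogeneous r := by
  induction r generalizing i j with
  | zero =>
    rw [pow_zero, one_apply]
    split_ifs
    exacts [isHomogeneous_one _ _, isHomogeneous_zero _ _ _]
  | succ r ih =>
    rw [pow_succ, mul_apply]
    exact IsHomogeneous.sum _ _ _ fun k _ => (ih i k).mul (isHomogeneous_X _ _)

theorem isHomogeneous_powerMinor_genericSymm (c : Fin 3 → UpperIndex (Fin 3)) :
    (powerMinor (genericSymm (Fin 3) K) c).IsHomogeneous 3 := by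
  rw [powerMinor, det_apply]
  refine IsHomogeneous.sum _ _ _ fun τ _ => ?_
  have prod_hom := IsHomogeneous.prod Finset.univ
    (fun s => (genericSymm (Fin 3) K ^ (τ s : ℕ)) (c s).1.1 (c s).1.2) (fun s => (τ s : ℕ))
    fun s _ => isHomogeneous_entry_genericSymm_pow _ _ _
  rw [Equiv.sum_comp τ (fun r : Fin 3 => (r : ℕ))] at prod_hom
  exact Submodule.smul_of_tower_mem (homogeneousSubmodule _ K 3) _ prod_hom

theorem span_powerMinors_le_homogeneousSubmodule :
    Submodule.span K (powerMinors (genericSymm (Fin 3) K)) ≤ homogeneousSubmodule _ K 3 := by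
  rw [Submodule.span_le]
  rintro _ ⟨c, -, rfl⟩
  exact isHomogeneous_powerMinor_genericSymm c

end GenericHomogeneous

section VanishingIdeal

variable {K : Type*} [CommRing K]

/-- The symmetric matrices `A` whose minimal polynomial has degree at most `2`, which over a domain
is read as the linear dependence of `I`, `A` and `A²`. -/
def symmPowDependent (n K : Type*) [Fintype n] [DecidableEq n] [CommRing K] : Set (Matrix n n K) :=
  {A | A.IsSymm ∧ ¬ LinearIndependent K (fun r : Fin 3 => A ^ (r : ℕ))}

theorem vecMulVec_add_smul_one_mem_symmPowDependent {n : Type*} [Fintype n] [DecidableEq n]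
    [Nontrivial K] (v : n → K) (t : K) : vecMulVec v v + t • 1 ∈ symmPowDependent n K := by
  refine ⟨IsSymm.add (transpose_vecMulVec v v) (isSymm_one.smul t), ?_⟩
  refine Fintype.not_linearIndependent_iff.mpr
    ⟨![t ^ 2 + t * (v ⬝ᵥ v), -(2 * t + v ⬝ᵥ v), 1], ?_, 2, by simp⟩
  simp [Fin.sum_univ_three, sq, add_mul, mul_add, vecMulVec_mul_vecMulVec]
  module

theorem mem_ideal_span_powerMinors_iff [IsDomain K] [Infinite K]
    (f : MvPolynomial (UpperIndex (Fin 3)) K) :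
    f ∈ Ideal.span (powerMinors (genericSymm (Fin 3) K)) ↔
      ∀ A ∈ symmPowDependent (Fin 3) K, eval (entries A) f = 0 := by
  refine ⟨fun hf A hA => ?_, fun hf => ?_⟩
  · suffices Ideal.span (powerMinors (genericSymm (Fin 3) K)) ≤ RingHom.ker (eval (entries A)) from
      this hf
    rw [Ideal.span_le]
    rintro _ ⟨c, -, rfl⟩
    rw [SetLike.mem_coe, RingHom.mem_ker, map_powerMinor, map_genericSymm hA.1 _ fun _ => eval_X _]
    exact powerMinor_eq_zero hA.2 c
  · rw [ideal_span_powerMinors]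
    exact mem_twoRowMinorIdeal_of_eval_eq_zero fun v t =>
      hf _ (vecMulVec_add_smul_one_mem_symmPowDependent v t)

theorem mem_submodule_span_powerMinors_iff [IsDomain K] [Infinite K]
    (f : MvPolynomial (UpperIndex (Fin 3)) K) :
    f ∈ Submodule.span K (powerMinors (genericSymm (Fin 3) K)) ↔
      f.IsHomogeneous 3 ∧ ∀ A ∈ symmPowDependent (Fin 3) K, eval (entries A) f = 0 := by
  rw [← mem_ideal_span_powerMinors_iff]
  refine ⟨fun hf => ⟨span_powerMinors_le_homogeneousSubmodule hf,
    Submodule.span_le_restrictScalars K _ _ hf⟩, fun ⟨hom, hf⟩ => ?_⟩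
  refine mem_submodule_span_of_mem_ideal_span ?_ hom hf
  rintro _ ⟨c, -, rfl⟩
  exact isHomogeneous_powerMinor_genericSymm c

theorem finrank_span_powerMinors_genericSymm [Nontrivial K] :
    Module.finrank K (Submodule.span K (powerMinors (genericSymm (Fin 3) K))) = 7 := by
  rw [span_powerMinors, ← span_modScalarMinor_basisPair K isSymm_genericSymm,
    finrank_span_eq_card linearIndependent_modScalarMinor_basisPair, Fintype.card_fin]

end VanishingIdeal

end

theorem stmt_11_general {K : Type*} [CommRing K] [IsDomain K] [Infinite K]
    (Xs : Matrix (Fin 3) (Fin 3) (MvPolynomial {p : Fin 3 × Fin 3 // p.1 ≤ p.2} K))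
    (hXs : ∀ i j : Fin 3, Xs i j = MvPolynomial.X ⟨(min i j, max i j), min_le_max⟩)
    (W : Set (Matrix (Fin 3) (Fin 3) K))
    (hW : W = {A | Aᵀ = A ∧ ¬ LinearIndependent K (fun r : Fin 3 => A ^ (r : ℕ))})
    (S' : Set (MvPolynomial {p : Fin 3 × Fin 3 // p.1 ≤ p.2} K))
    (hS' : S' = { d | ∃ c : Fin 3 → {p : Fin 3 × Fin 3 // p.1 ≤ p.2}, Function.Injective c ∧
      d = Matrix.det (Matrix.of fun r s : Fin 3 =>
        (Xs ^ (r : ℕ)) (c s).1.1 (c s).1.2) }) :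
    (∀ f : MvPolynomial {p : Fin 3 × Fin 3 // p.1 ≤ p.2} K, f ∈ Ideal.span S' ↔
      ∀ A ∈ W, MvPolynomial.eval (fun p => A p.1.1 p.1.2) f = 0) ∧
    (∀ f : MvPolynomial {p : Fin 3 × Fin 3 // p.1 ≤ p.2} K, f ∈ Submodule.span K S' ↔
      (f.IsHomogeneous 3 ∧ ∀ A ∈ W, MvPolynomial.eval (fun p => A p.1.1 p.1.2) f = 0)) ∧
    Module.finrank K (Submodule.span K S') = 7 := by
  obtain rfl : Xs = genericSymm (Fin 3) K := Matrix.ext hXs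
  subst hW hS'
  exact ⟨mem_ideal_span_powerMinors_iff, mem_submodule_span_powerMinors_iff,
    finrank_span_powerMinors_genericSymm⟩

/-- For the variety `W` of complex symmetric `3×3` matrices with minimal polynomial
of degree at most `2`, in the coordinate ring of symmetric matrices (polynomials in
the six variables `(i,j)`, `i ≤ j`): the vanishing ideal of `W` is generated by the
`3×3` minors of the `3×6` matrix whose rows list the entries of `I₃`, of the generic
symmetric matrix and of its square; their ℂ-span is the degree-3 homogeneous
component of the vanishing ideal; and this space has dimension `7`. -/
theorem stmt_11
    (Xs : Matrix (Fin 3) (Fin 3) (MvPolynomial {p : Fin 3 × Fin 3 // p.1 ≤ p.2} ℂ))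
    (hXs : ∀ i j : Fin 3, Xs i j = MvPolynomial.X ⟨(min i j, max i j), min_le_max⟩)
    (W : Set (Matrix (Fin 3) (Fin 3) ℂ))
    (hW : W = {A | Aᵀ = A ∧ ¬ LinearIndependent ℂ (fun r : Fin 3 => A ^ (r : ℕ))})
    (S' : Set (MvPolynomial {p : Fin 3 × Fin 3 // p.1 ≤ p.2} ℂ))
    (hS' : S' = { d | ∃ c : Fin 3 → {p : Fin 3 × Fin 3 // p.1 ≤ p.2}, Function.Injective c ∧
      d = Matrix.det (Matrix.of fun r s : Fin 3 =>
        (Xs ^ (r : ℕ)) (c s).1.1 (c s).1.2) }) :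
    (∀ f : MvPolynomial {p : Fin 3 × Fin 3 // p.1 ≤ p.2} ℂ, f ∈ Ideal.span S' ↔
      ∀ A ∈ W, MvPolynomial.eval (fun p => A p.1.1 p.1.2) f = 0) ∧
    (∀ f : MvPolynomial {p : Fin 3 × Fin 3 // p.1 ≤ p.2} ℂ, f ∈ Submodule.span ℂ S' ↔
      (f.IsHomogeneous 3 ∧ ∀ A ∈ W, MvPolynomial.eval (fun p => A p.1.1 p.1.2) f = 0)) ∧
    Module.finrank ℂ (Submodule.span ℂ S') = 7 :=
  stmt_11_general Xs hXs W hW S' hS'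
end

section
/- Let n ≥ 2 and 0 ≤ k ≤ n−2. Let f ∈ MvPolynomial (Fin n × Fin n) ℂ be homogeneous of degree d with d < (n−k)(n−k−1), and suppose f is invariant under special unitary conjugation on Hermitian matrices: for every g in the special unitary group (g·g* = 1, det g = 1) and every Hermitian A ∈ Matrix (Fin n) (Fin n) ℂ, f(g·A·g*) = f(A). If f(A) = 0 for every Hermitian A whose powers A^0, A^1, …, A^{n−k−1} are linearly dependent over ℂ (i.e. A has at most n−k−1 distinct eigenvalues), then f(A) = 0 for every Hermitian matrix A. -/
/-!
Restricted to diagonal matrices, `f` becomes a symmetric polynomial `p` in the eigenvalues, and by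
the spectral theorem it suffices to show `p = 0`. If `p` vanishes at all points with fewer than `m`
distinct coordinates, then so do its partial derivatives: moving a whole class of equal coordinates
keeps the point in this set, and by symmetry the partial derivatives along a class agree. Now move
the coordinates of a point with `m` distinct values along a line on which the `m (m - 1) / 2` pairs
of values collide at distinct times. Each collision is a double root of `p` on this line, so
`deg p < m (m - 1)` forces `p` to vanish on the line. Hence `p` vanishes at all points with at most
`m` distinct coordinates, and one continues by induction on `m`.
-/

open MvPolynomial Matrix

section Derivatives

variable {σ τ R : Type*} [CommSemiring R]

theorem derivation_aeval_eq_sum {A M : Type*} [Fintype σ] [CommSemiring A] [Algebra R A]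
    [AddCommMonoid M] [Module A M] [Module R M] (D : Derivation R A M) (g : σ → A)
    (p : MvPolynomial σ R) : D (aeval g p) = ∑ i, aeval g (pderiv i p) • D (g i) := by
  classical
  induction p using MvPolynomial.induction_on with
  | C a => simp
  | add p q hp hq => simp only [map_add, hp, hq, add_smul, Finset.sum_add_distrib]
  | mul_X p j hp =>
    simp [hp, Derivation.leibniz, pderiv_X, Pi.single_apply, apply_ite, add_smul,
      Finset.sum_add_distrib, Finset.smul_sum, mul_smul]

theorem pderiv_rename_eq_sum [Fintype σ] [DecidableEq τ] (c : σ → τ) (k : τ)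
    (p : MvPolynomial σ R) :
    pderiv k (rename c p) = ∑ i with c i = k, rename c (pderiv i p) := by
  have hchain := derivation_aeval_eq_sum (pderiv k) (X ∘ c : σ → MvPolynomial τ R) p
  simp only [← rename_eq_aeval, Function.comp_apply] at hchain
  simpa [Finset.sum_filter, pderiv_X, Pi.single_apply] using hchain

theorem rename_pderiv_eq_of_apply_eq {p : MvPolynomial σ R} (hp : p.IsSymmetric) {c : σ → τ}
    {i j : σ} (hij : c i = c j) : rename c (pderiv i p) = rename c (pderiv j p) := by
  classical
  have hswap : pderiv j p = rename (Equiv.swap i j) (pderiv i p) := by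
    simpa only [hp (Equiv.swap i j), Equiv.swap_apply_left] using
      pderiv_rename (R := R) (Equiv.swap i j).injective i p
  have hc : c ∘ Equiv.swap i j = c := by
    simp [Equiv.comp_swap_eq_update, hij]
  rw [hswap, rename_rename, hc]

end Derivatives

theorem totalDegree_aeval_le_of_forall_le_one {σ τ R : Type*} [CommSemiring R]
    {g : σ → MvPolynomial τ R} (hg : ∀ i, (g i).totalDegree ≤ 1) (p : MvPolynomial σ R) :
    (aeval g p).totalDegree ≤ p.totalDegree := by
  rw [aeval_def, eval₂_eq, algebraMap_eq]
  refine totalDegree_finsetSum_le fun s hs => ?_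
  calc (C (coeff s p) * ∏ i ∈ s.support, g i ^ s i).totalDegree
      ≤ (C (coeff s p)).totalDegree + ∑ i ∈ s.support, (g i ^ s i).totalDegree :=
        (totalDegree_mul _ _).trans (by gcongr; exact totalDegree_finsetProd _ _)
    _ ≤ ∑ i ∈ s.support, s i := by
        rw [totalDegree_C, zero_add]
        exact Finset.sum_le_sum fun i _ =>
          (totalDegree_pow _ _).trans (by simpa using Nat.mul_le_mul_left (s i) (hg i))
    _ ≤ p.totalDegree := le_totalDegree hs

theorem eq_zero_of_natDegree_lt_two_mul_card {R : Type*} [CommRing R] [IsDomain R]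
    {q : Polynomial R} {T : Finset R} (heval : ∀ t ∈ T, q.eval t = 0)
    (hderiv : ∀ t ∈ T, q.derivative.eval t = 0) (hdeg : q.natDegree < 2 * T.card) : q = 0 := by
  classical
  by_contra hq
  have hdouble : 2 • T.val ≤ q.roots := by
    refine Multiset.le_iff_count.2 fun t => ?_
    rw [Multiset.count_nsmul, Polynomial.count_roots]
    by_cases ht : t ∈ T
    · rw [Multiset.count_eq_one_of_mem T.nodup ht]
      exact (Polynomial.one_lt_rootMultiplicity_iff_isRoot hq).2 ⟨heval t ht, hderiv t ht⟩
    · simp [Multiset.count_eq_zero_of_notMem (mt Finset.mem_def.2 ht)]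
  have hcard := (Multiset.card_le_card hdouble).trans q.card_roots'
  exact absurd hcard (by simpa using hdeg)

section Collisions

variable {K : Type*} [Field K]

/-- The slope of the chord of `u ↦ u ^ 3 + s * u ^ 2` through `u` and `v`. Points `u ≠ v` moving
with velocities given by this function collide at the time `-(chordSlope s u v)⁻¹`. -/
def chordSlope (s u v : K) : K := u ^ 2 + u * v + v ^ 2 + s * (u + v)

theorem eventually_cofinite_add_mul_ne_zero {a b : K} (hab : b = 0 → a ≠ 0) :
    ∀ᶠ s in Filter.cofinite, a + s * b ≠ 0 := by
  by_cases hb : b = 0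
  · simp [hb, hab hb]
  · filter_upwards [Filter.eventually_cofinite_ne (-a / b)] with s hs h
    exact hs (by rw [eq_div_iff hb]; linear_combination h)

theorem eventually_chordSlope_ne_zero {u v : K} (huv : u ≠ v) :
    ∀ᶠ s in Filter.cofinite, chordSlope s u v ≠ 0 := by
  refine eventually_cofinite_add_mul_ne_zero fun hsum hsq => huv ?_
  have hv : v = 0 := pow_eq_zero_iff two_ne_zero |>.1 (by linear_combination hsq - u * hsum)
  linear_combination hsum - 2 * hv

theorem eventually_eq_or_eq_swap_of_chordSlope_eq (q r : K × K) :
    ∀ᶠ s in Filter.cofinite,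
      chordSlope s q.1 q.2 = chordSlope s r.1 r.2 → q = r ∨ q = r.swap := by
  obtain ⟨u, v⟩ := q
  obtain ⟨u', v'⟩ := r
  by_cases hqr : (u, v) = (u', v') ∨ (u, v) = (v', u')
  · exact .of_forall fun _ _ => hqr
  have hne : ∀ᶠ s in Filter.cofinite, (u ^ 2 + u * v + v ^ 2 - (u' ^ 2 + u' * v' + v' ^ 2)) +
      s * (u + v - (u' + v')) ≠ 0 := by
    refine eventually_cofinite_add_mul_ne_zero fun hsum hsq => hqr ?_
    have hprod : (u - u') * (u - v') = 0 := by
      linear_combination hsq - (v + u' + v') * hsum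
    rcases mul_eq_zero.1 hprod with h | h
    · exact .inl (Prod.ext (by linear_combination h) (by linear_combination hsum - h))
    · exact .inr (Prod.ext (by linear_combination h) (by linear_combination hsum - h))
  filter_upwards [hne] with s hs h
  exact absurd (by unfold chordSlope at h; linear_combination h) hs

theorem exists_chordSlope_generic [Infinite K] (V : Finset K) : ∃ s : K,
    (∀ q ∈ V.offDiag, chordSlope s q.1 q.2 ≠ 0) ∧
    ∀ q ∈ V.offDiag, ∀ r ∈ V.offDiag,
      chordSlope s q.1 q.2 = chordSlope s r.1 r.2 → q = r ∨ q = r.swap := by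
  refine Filter.Eventually.exists (f := Filter.cofinite) (Filter.Eventually.and ?_ ?_)
  · exact (Filter.eventually_all_finset _).2 fun q hq =>
      eventually_chordSlope_ne_zero (Finset.mem_offDiag.1 hq).2.2
  · simp only [Filter.eventually_all_finset]
    exact fun q _ r _ => eventually_eq_or_eq_swap_of_chordSlope_eq q r

theorem exists_velocity_collision_times [Infinite K] (V : Finset K) :
    ∃ (b : K → K) (T : Finset K), V.card * (V.card - 1) ≤ 2 * T.card ∧
      ∀ t ∈ T, ¬ Set.InjOn (fun u => u + b u * t) V := by
  classical
  obtain ⟨s, hne, hinj⟩ := exists_chordSlope_generic V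
  refine ⟨fun u => u ^ 3 + s * u ^ 2, V.offDiag.image fun q => -(chordSlope s q.1 q.2)⁻¹, ?_, ?_⟩
  · rw [Nat.mul_sub, mul_one, ← Finset.offDiag_card]
    refine Finset.card_le_mul_card_image _ _ (Finset.forall_mem_image.2 fun r hr => ?_)
    refine (Finset.card_le_card (t := {r, r.swap}) fun q hq => ?_).trans Finset.card_le_two
    obtain ⟨hq, hqr⟩ := Finset.mem_filter.1 hq
    simpa using hinj q hq r hr (inv_injective (neg_injective hqr))
  · refine Finset.forall_mem_image.2 fun q hq hinjOn => ?_
    have hslope := hne q hq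
    obtain ⟨hu, hv, huv⟩ := Finset.mem_offDiag.1 hq
    refine huv (hinjOn hu hv ?_)
    have hchord : q.1 ^ 3 + s * q.1 ^ 2 - (q.2 ^ 3 + s * q.2 ^ 2) =
        (q.1 - q.2) * chordSlope s q.1 q.2 := by
      unfold chordSlope; ring
    field_simp
    linear_combination -hchord

end Collisions

/-- `p` vanishes at every point with fewer than `m` distinct coordinates. The number of distinct
coordinates is encoded as `Set.ncard` of the range, so `σ` is meant to be finite. -/
def VanishesOnFewValues {σ R : Type*} [CommSemiring R] (p : MvPolynomial σ R) (m : ℕ) : Prop :=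
  ∀ x : σ → R, (Set.range x).ncard < m → eval x p = 0

section FewValues

variable {σ R : Type*} [CommRing R] [IsDomain R] {p : MvPolynomial σ R} {S : Set R} {m : ℕ}

theorem isSymmetric_of_infinite (hS : S.Infinite)
    (h : ∀ (e : Equiv.Perm σ) (x : σ → R), Set.range x ⊆ S → eval (x ∘ e) p = eval x p) :
    p.IsSymmetric := fun e =>
  funext_set (fun _ => S) (fun _ => hS) fun x hx => by
    rw [eval_rename, h e x (Set.range_subset_iff.2 fun i => hx i trivial)]

theorem rename_eq_zero_of_infinite {τ : Type*} [Finite τ] (hS : S.Infinite)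
    (h : ∀ x : σ → R, Set.range x ⊆ S → (Set.range x).ncard < m → eval x p = 0)
    (c : σ → τ) (hτ : Nat.card τ < m) : rename c p = 0 := by
  refine funext_set (fun _ => S) (fun _ => hS) fun y hy => ?_
  have hcard : (Set.range (y ∘ c)).ncard ≤ Nat.card τ := by
    rw [Set.range_comp, ← Set.ncard_univ]
    exact (Set.ncard_image_le).trans (Set.ncard_le_ncard (Set.subset_univ _))
  rw [eval_rename, map_zero]
  exact h _ (Set.range_subset_iff.2 fun i => hy (c i) trivial) (hcard.trans_lt hτ)

theorem vanishesOnFewValues_of_infinite [Finite σ] (hS : S.Infinite)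
    (h : ∀ x : σ → R, Set.range x ⊆ S → (Set.range x).ncard < m → eval x p = 0) :
    VanishesOnFewValues p m := fun x hx => by
  have hzero := rename_eq_zero_of_infinite hS h (Set.rangeFactorization x) hx
  simpa [eval_rename, Function.comp_def] using congrArg (eval Subtype.val) hzero

theorem VanishesOnFewValues.pderiv [Finite σ] [CharZero R] (hp : p.IsSymmetric)
    (h : VanishesOnFewValues p m) (i : σ) : VanishesOnFewValues (pderiv i p) m := fun x hx => by
  classical
  have := Fintype.ofFinite σ
  set c := Set.rangeFactorization x
  have hzero : rename c p = 0 :=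
    rename_eq_zero_of_infinite Set.infinite_univ (fun y _ => h y) c hx
  have hclass : (Finset.univ.filter (c · = c i)).card • rename c (MvPolynomial.pderiv i p) = 0 := by
    rw [← Finset.sum_const, ← map_zero (MvPolynomial.pderiv (c i)), ← hzero, pderiv_rename_eq_sum]
    refine Finset.sum_congr rfl fun j hj => ?_
    exact rename_pderiv_eq_of_apply_eq hp (Finset.mem_filter.1 hj).2.symm
  have hpderiv := (smul_eq_zero.1 hclass).resolve_left
    (Finset.card_ne_zero_of_mem (Finset.mem_filter.2 ⟨Finset.mem_univ i, rfl⟩))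
  simpa [eval_rename, c, Function.comp_def] using congrArg (eval Subtype.val) hpderiv

end FewValues

/-- The restriction of `p` to the line `t ↦ x + t • v`, as a polynomial in `t`. -/
noncomputable def lineRestriction {σ R : Type*} [CommSemiring R] (x v : σ → R)
    (p : MvPolynomial σ R) : Polynomial R :=
  aeval (fun i => Polynomial.C (v i) * Polynomial.X + Polynomial.C (x i)) p

section LineRestriction

variable {σ R : Type*} [CommSemiring R] (x v : σ → R) (p : MvPolynomial σ R)

theorem eval_lineRestriction (t : R) :
    (lineRestriction x v p).eval t = eval (fun i => x i + v i * t) p := by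
  rw [lineRestriction, ← Polynomial.coe_aeval_eq_eval, comp_aeval_apply, ← aeval_eq_eval]
  simp [add_comm]

theorem eval_derivative_lineRestriction [Fintype σ] (t : R) :
    (lineRestriction x v p).derivative.eval t =
      ∑ i, eval (fun i => x i + v i * t) (pderiv i p) * v i := by
  have hchain := derivation_aeval_eq_sum Polynomial.derivative'
    (fun i => Polynomial.C (v i) * Polynomial.X + Polynomial.C (x i)) p
  change Polynomial.derivative (lineRestriction x v p) =
    ∑ i, lineRestriction x v (pderiv i p) * _ at hchain
  simpa [Polynomial.eval_finsetSum, eval_lineRestriction] using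
    congrArg (Polynomial.eval t) hchain

theorem natDegree_lineRestriction_le : (lineRestriction x v p).natDegree ≤ p.totalDegree :=
  (aeval_natDegree_le p le_rfl _ fun _ => Polynomial.natDegree_linear_le).trans_eq (mul_one _)

end LineRestriction

section SymmetricPolynomials

variable {σ K : Type*} [Finite σ] [Field K] {p : MvPolynomial σ K} {m : ℕ}

theorem VanishesOnFewValues.succ [Infinite K] (h : VanishesOnFewValues p m)
    (hderiv : ∀ i, VanishesOnFewValues (MvPolynomial.pderiv i p) m)
    (hdeg : p.totalDegree < m * (m - 1)) : VanishesOnFewValues p (m + 1) := fun x hx => by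
  classical
  have := Fintype.ofFinite σ
  rcases Nat.lt_succ_iff_lt_or_eq.1 hx with hlt | rfl
  · exact h x hlt
  obtain ⟨b, T, hT, hcollide⟩ := exists_velocity_collision_times (Set.range x).toFinset
  rw [← Set.ncard_eq_toFinset_card'] at hT
  have hfew : ∀ t ∈ T, (Set.range fun i => x i + b (x i) * t).ncard < (Set.range x).ncard := by
    intro t ht
    have hrange : (Set.range fun i => x i + b (x i) * t) =
        (fun u => u + b u * t) '' Set.range x := Set.range_comp (fun u => u + b u * t) x
    rw [hrange]
    refine (Set.ncard_image_le).lt_of_ne fun hcard => hcollide t ht ?_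
    simpa using Set.injOn_of_ncard_image_eq hcard
  have hline : lineRestriction x (b ∘ x) p = 0 := by
    refine eq_zero_of_natDegree_lt_two_mul_card (T := T) (fun t ht => ?_) (fun t ht => ?_) ?_
    · rw [eval_lineRestriction]
      exact h _ (hfew t ht)
    · rw [eval_derivative_lineRestriction]
      exact Finset.sum_eq_zero fun i _ => mul_eq_zero_of_left (hderiv i _ (hfew t ht)) _
    · calc _ ≤ p.totalDegree := natDegree_lineRestriction_le _ _ _
        _ < _ := hdeg
        _ ≤ 2 * T.card := hT
  simpa [hline] using (eval_lineRestriction x (b ∘ x) p 0).symm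

theorem VanishesOnFewValues.eq_zero [CharZero K] (h : VanishesOnFewValues p m)
    (hp : p.IsSymmetric) (hdeg : p.totalDegree < m * (m - 1)) : p = 0 := by
  have hall : ∀ N ≥ m, VanishesOnFewValues p N := fun N hN => by
    induction N, hN using Nat.le_induction with
    | base => exact h
    | succ N hN ih => exact ih.succ (ih.pderiv hp) (hdeg.trans_le (by gcongr))
  refine MvPolynomial.funext fun x => ?_
  rw [map_zero]
  exact hall (m + (Set.range x).ncard + 1) (by omega) x (by omega)

end SymmetricPolynomials

section Matrices

theorem not_linearIndependent_pow_of_aeval_eq_zero {R A : Type*} [CommRing R] [Ring A]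
    [Algebra R A] {q : Polynomial R} {m : ℕ} {a : A} (hq : q ≠ 0) (hdeg : q.natDegree < m)
    (ha : Polynomial.aeval a q = 0) : ¬ LinearIndependent R fun r : Fin m => a ^ (r : ℕ) := by
  intro hli
  rw [Polynomial.aeval_eq_sum_range' hdeg,
    ← Fin.sum_univ_eq_sum_range fun r => q.coeff r • a ^ r] at ha
  exact hq (Polynomial.leadingCoeff_eq_zero.1
    (Fintype.linearIndependent_iff.1 hli (fun r => q.coeff r) ha ⟨_, hdeg⟩))

theorem isHermitian_diagonal_ofReal {ι 𝕜 : Type*} [DecidableEq ι] [RCLike 𝕜] (x : ι → ℝ) :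
    (diagonal (RCLike.ofReal ∘ x : ι → 𝕜)).IsHermitian :=
  isHermitian_diagonal_iff.2 fun i => RCLike.conj_ofReal (x i)

variable {ι : Type*} [Fintype ι] [DecidableEq ι]

theorem not_linearIndependent_diagonal_pow {R : Type*} [CommRing R] [Nontrivial R] {x : ι → R}
    {m : ℕ} (hx : (Set.range x).ncard < m) :
    ¬ LinearIndependent R fun r : Fin m => diagonal x ^ (r : ℕ) := by
  classical
  set V := (Set.range x).toFinset
  have hmonic : (∏ v ∈ V, (Polynomial.X - Polynomial.C v)).Monic :=
    Polynomial.monic_prod_X_sub_C id V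
  refine not_linearIndependent_pow_of_aeval_eq_zero hmonic.ne_zero ?_ ?_
  · simpa [V, Set.ncard_eq_toFinset_card'] using hx
  · have hpi : Polynomial.aeval x (∏ v ∈ V, (Polynomial.X - Polynomial.C v)) = 0 := by
      ext i
      rw [Polynomial.aeval_pi_apply₂, map_prod]
      exact Finset.prod_eq_zero (Set.mem_toFinset.2 (Set.mem_range_self i)) (by simp)
    change Polynomial.aeval (diagonalAlgHom R x) _ = 0
    rw [Polynomial.aeval_algHom_apply, hpi, map_zero]

theorem exists_specialUnitary_conj_diagonal_eq {R : Type*} [CommRing R] [StarRing R]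
    {U : Matrix ι ι R} (hU : U ∈ unitaryGroup ι R) (a : ι → R) :
    ∃ g ∈ specialUnitaryGroup ι R, g * diagonal a * star g = U * diagonal a * star U := by
  rcases isEmpty_or_nonempty ι with _ | ⟨⟨i₀⟩⟩
  · exact ⟨U, ⟨hU, det_isEmpty⟩, rfl⟩
  have hdet : star U.det * U.det = 1 := (det_of_mem_unitary hU).1
  -- A diagonal unitary matrix commutes with `diagonal a`, so it can absorb the determinant of `U`.
  set E : Matrix ι ι R := diagonal (Function.update 1 i₀ (star U.det))
  have hE : E ∈ unitaryGroup ι R := by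
    rw [mem_unitaryGroup_iff, star_eq_conjTranspose, diagonal_conjTranspose,
      diagonal_mul_diagonal, diagonal_eq_one]
    ext i
    by_cases hi : i = i₀
    · subst hi; simpa using hdet
    · simp [hi]
  refine ⟨U * E, ⟨mul_mem hU hE, ?_⟩, ?_⟩
  · simpa [E, det_diagonal, Finset.prod_update_of_mem, mul_comm] using hdet
  · have hcomm : E * diagonal a = diagonal a * E := by
      simp only [E, diagonal_mul_diagonal, mul_comm]
    calc U * E * diagonal a * star (U * E) = U * (E * diagonal a) * star E * star U := by
          simp only [star_mul, Matrix.mul_assoc]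
      _ = U * diagonal a * (E * star E) * star U := by
          simp only [hcomm, Matrix.mul_assoc]
      _ = U * diagonal a * star U := by
          rw [mem_unitaryGroup_iff.1 hE, Matrix.mul_one]

theorem permMatrix_mem_unitaryGroup {R : Type*} [CommRing R] [StarRing R] (e : Equiv.Perm ι) :
    e.permMatrix R ∈ unitaryGroup ι R := by
  rw [mem_unitaryGroup_iff, star_eq_conjTranspose, conjTranspose_permMatrix, ← permMatrix_mul,
    inv_mul_cancel, permMatrix_one]

theorem permMatrix_conj_diagonal {R : Type*} [Semiring R] [StarRing R] (e : Equiv.Perm ι)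
    (a : ι → R) : e.permMatrix R * diagonal a * star (e.permMatrix R) = diagonal (a ∘ e) := by
  rw [star_eq_conjTranspose, conjTranspose_permMatrix, PEquiv.toMatrix_toPEquiv_mul,
    PEquiv.mul_toMatrix_toPEquiv, submatrix_submatrix]
  exact submatrix_diagonal a e e.injective

end Matrices

/-- The restriction to diagonal matrices of a polynomial function `f` of the entries of a matrix,
as a polynomial in the diagonal entries. -/
noncomputable def diagonalRestriction {ι R : Type*} [DecidableEq ι] [CommSemiring R]
    (f : MvPolynomial (ι × ι) R) : MvPolynomial ι R :=
  aeval (fun q : ι × ι => diagonal X q.1 q.2) f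

section DiagonalRestriction

variable {ι R : Type*} [DecidableEq ι] [CommSemiring R] (f : MvPolynomial (ι × ι) R)

theorem eval_diagonalRestriction (x : ι → R) :
    eval x (diagonalRestriction f) = eval (fun q => diagonal x q.1 q.2) f := by
  rw [diagonalRestriction, ← aeval_eq_eval, comp_aeval_apply, ← aeval_eq_eval]
  congr 2
  ext q
  rw [diagonal_apply, diagonal_apply, apply_ite (aeval x), aeval_X, map_zero]

theorem totalDegree_diagonalRestriction_le :
    (diagonalRestriction f).totalDegree ≤ f.totalDegree := by
  refine totalDegree_aeval_le_of_forall_le_one (fun q => ?_) f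
  rw [diagonal_apply]
  split_ifs
  · exact (isHomogeneous_X R q.1).totalDegree_le
  · simp

end DiagonalRestriction

/-- `f`, as a polynomial function of the entries of a matrix, is invariant under special unitary
conjugation of Hermitian matrices. -/
def IsSpecialUnitaryInvariant {ι 𝕜 : Type*} [Fintype ι] [DecidableEq ι] [RCLike 𝕜]
    (f : MvPolynomial (ι × ι) 𝕜) : Prop :=
  ∀ g ∈ specialUnitaryGroup ι 𝕜, ∀ A : Matrix ι ι 𝕜, A.IsHermitian →
    eval (fun q => (g * A * star g) q.1 q.2) f = eval (fun q => A q.1 q.2) f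

section SpecialUnitaryInvariants

variable {ι 𝕜 : Type*} [Fintype ι] [DecidableEq ι] [RCLike 𝕜] {f : MvPolynomial (ι × ι) 𝕜}

theorem infinite_range_ofReal : (Set.range (RCLike.ofReal : ℝ → 𝕜)).Infinite :=
  Set.infinite_range_of_injective RCLike.ofReal_injective

theorem IsSpecialUnitaryInvariant.eval_unitary_conj_diagonal (hinv : IsSpecialUnitaryInvariant f)
    {U : Matrix ι ι 𝕜} (hU : U ∈ unitaryGroup ι 𝕜) (x : ι → ℝ) :
    eval (fun q => (U * diagonal (RCLike.ofReal ∘ x : ι → 𝕜) * star U) q.1 q.2) f =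
      eval (RCLike.ofReal ∘ x) (diagonalRestriction f) := by
  obtain ⟨g, hg, hgU⟩ := exists_specialUnitary_conj_diagonal_eq hU (RCLike.ofReal ∘ x)
  rw [← hgU, hinv g hg _ (isHermitian_diagonal_ofReal x), eval_diagonalRestriction]

theorem IsSpecialUnitaryInvariant.isSymmetric_diagonalRestriction
    (hinv : IsSpecialUnitaryInvariant f) : (diagonalRestriction f).IsSymmetric := by
  refine isSymmetric_of_infinite infinite_range_ofReal fun e x hx => ?_
  obtain ⟨y, rfl⟩ := Set.range_subset_range_iff_exists_comp.1 hx
  rw [← hinv.eval_unitary_conj_diagonal (permMatrix_mem_unitaryGroup e) y,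
    permMatrix_conj_diagonal, eval_diagonalRestriction]

theorem vanishesOnFewValues_diagonalRestriction {m : ℕ}
    (hvan : ∀ A : Matrix ι ι 𝕜, A.IsHermitian →
      ¬ LinearIndependent 𝕜 (fun r : Fin m => A ^ (r : ℕ)) →
      eval (fun q => A q.1 q.2) f = 0) :
    VanishesOnFewValues (diagonalRestriction f) m := by
  refine vanishesOnFewValues_of_infinite infinite_range_ofReal fun x hx hcard => ?_
  obtain ⟨y, rfl⟩ := Set.range_subset_range_iff_exists_comp.1 hx
  rw [eval_diagonalRestriction]
  exact hvan _ (isHermitian_diagonal_ofReal y) (not_linearIndependent_diagonal_pow hcard)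

end SpecialUnitaryInvariants

theorem stmt_14_general {ι 𝕜 : Type*} [Fintype ι] [DecidableEq ι] [RCLike 𝕜] {m : ℕ}
    {f : MvPolynomial (ι × ι) 𝕜} (hdeg : f.totalDegree < m * (m - 1))
    (hinv : IsSpecialUnitaryInvariant f)
    (hvan : ∀ A : Matrix ι ι 𝕜, A.IsHermitian →
      ¬ LinearIndependent 𝕜 (fun r : Fin m => A ^ (r : ℕ)) →
      eval (fun q => A q.1 q.2) f = 0)
    {A : Matrix ι ι 𝕜} (hA : A.IsHermitian) : eval (fun q => A q.1 q.2) f = 0 := by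
  have hzero : diagonalRestriction f = 0 :=
    (vanishesOnFewValues_diagonalRestriction hvan).eq_zero hinv.isSymmetric_diagonalRestriction
      ((totalDegree_diagonalRestriction_le f).trans_lt hdeg)
  rw [hA.spectral_theorem, Unitary.conjStarAlgAut_apply,
    hinv.eval_unitary_conj_diagonal hA.eigenvectorUnitary.2, hzero, map_zero]

/-- For `n ≥ 2`, `0 ≤ k ≤ n-2`: a homogeneous `SU(n)`-invariant polynomial of degree
`d < (n-k)(n-k-1)` vanishing on all Hermitian matrices with at most `n-k-1` distinct
eigenvalues vanishes on all Hermitian matrices. -/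
theorem stmt_14 (n k : ℕ) (hn : 2 ≤ n) (hk : k ≤ n - 2)
    (f : MvPolynomial (Fin n × Fin n) ℂ) (d : ℕ)
    (hf : f.IsHomogeneous d) (hd : d < (n - k) * (n - k - 1))
    (hinv : ∀ g : Matrix (Fin n) (Fin n) ℂ, g * g.conjTranspose = 1 → g.det = 1 →
      ∀ A : Matrix (Fin n) (Fin n) ℂ, A.IsHermitian →
        MvPolynomial.eval (fun p => (g * A * g.conjTranspose) p.1 p.2) f =
          MvPolynomial.eval (fun p => A p.1 p.2) f)
    (hvan : ∀ A : Matrix (Fin n) (Fin n) ℂ, A.IsHermitian →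
      ¬ LinearIndependent ℂ (fun r : Fin (n - k) => A ^ (r : ℕ)) →
      MvPolynomial.eval (fun p => A p.1 p.2) f = 0) :
    ∀ A : Matrix (Fin n) (Fin n) ℂ, A.IsHermitian →
      MvPolynomial.eval (fun p => A p.1 p.2) f = 0 :=
  fun _ hA => stmt_14_general (hf.totalDegree_le.trans_lt hd)
    (fun g hg => hinv g (mem_unitaryGroup_iff.1 hg.1) hg.2) hvan hA
end
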